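/- arXiv:1105.5176 — 2 statements merged into one kernel-verified Lean document; each statement's English description precedes it below -/
import Mathlib

section
/- (Høholdt–Jensen) Let s be a real number with -1/2 < s ≤ 1/2. For each odd prime p let L^{(p)} be the Legendre sequence of length p. Then, as p → ∞ through the odd primes, 1/F((L^{(p)})_s) converges to 1/6 + 8(|s| - 1/4)². -/
open scoped BigOperators

noncomputable section

/-- `A` is an array of size `n × m`: entries vanish outside `[0,n) × [0,m)`. -/
def IsArray (n m : ℤ) (A : ℤ × ℤ → ℝ) : Prop :=
  ∀ i j : ℤ, A (i, j) ≠ 0 → 0 ≤ i ∧ i < n ∧ 0 ≤ j ∧ j < m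

/-- `A` is a binary array of size `n × m`. -/
def IsBinaryArray (n m : ℤ) (A : ℤ × ℤ → ℝ) : Prop :=
  IsArray n m A ∧
    ∀ i j : ℤ, 0 ≤ i → i < n → 0 ≤ j → j < m → A (i, j) = 1 ∨ A (i, j) = -1

/-- Aperiodic autocorrelation of a two-dimensional array at displacement `(u, v)`. -/
def autocorr (A : ℤ × ℤ → ℝ) (u v : ℤ) : ℝ :=
  ∑ᶠ i : ℤ, ∑ᶠ j : ℤ, A (i, j) * A (i + u, j + v)

/-- Merit factor of an array of size `n × m`. -/
def meritFactor (n m : ℤ) (A : ℤ × ℤ → ℝ) : ℝ :=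
  ((n : ℝ) * m) ^ 2 / ∑ᶠ uv ∈ {x : ℤ × ℤ | x ≠ (0, 0)}, (autocorr A uv.1 uv.2) ^ 2

/-- `a` is a sequence of length `n`: entries vanish outside `[0,n)`. -/
def IsSeq (n : ℤ) (a : ℤ → ℝ) : Prop := ∀ i : ℤ, a i ≠ 0 → 0 ≤ i ∧ i < n

/-- `a` is a binary sequence of length `n`. -/
def IsBinarySeq (n : ℤ) (a : ℤ → ℝ) : Prop :=
  IsSeq n a ∧ ∀ i : ℤ, 0 ≤ i → i < n → a i = 1 ∨ a i = -1

/-- Aperiodic autocorrelation of a sequence at displacement `u`. -/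
def seqAutocorr (a : ℤ → ℝ) (u : ℤ) : ℝ := ∑ᶠ i : ℤ, a i * a (i + u)

/-- Merit factor of a sequence of length `n`. -/
def seqMeritFactor (n : ℤ) (a : ℤ → ℝ) : ℝ :=
  (n : ℝ) ^ 2 / ∑ᶠ u ∈ {u : ℤ | u ≠ 0}, (seqAutocorr a u) ^ 2

/-- Rotation of a sequence of length `n` by a real number `s`. -/
def seqRotate (n : ℤ) (s : ℝ) (a : ℤ → ℝ) : ℤ → ℝ :=
  fun i => if 0 ≤ i ∧ i < n then a ((i + ⌊(n : ℝ) * s⌋) % n) else 0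

/-- Rotation of an array of size `n × m` by real numbers `s` and `t`. -/
def arrRotate (n m : ℤ) (s t : ℝ) (A : ℤ × ℤ → ℝ) : ℤ × ℤ → ℝ :=
  fun x => if 0 ≤ x.1 ∧ x.1 < n ∧ 0 ≤ x.2 ∧ x.2 < m then
    A ((x.1 + ⌊(n : ℝ) * s⌋) % n, (x.2 + ⌊(m : ℝ) * t⌋) % m) else 0

/-- Generating function of an array of size `n × m`, evaluated at `(x, y)`. -/
def genFun (n m : ℕ) (A : ℤ × ℤ → ℝ) (x y : ℂ) : ℂ :=
  ∑ i ∈ Finset.range n, ∑ j ∈ Finset.range m, (A (i, j) : ℂ) * x ^ i * y ^ j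

/-- `zeta d = e^{iπ/d}`, a primitive `(2d)`-th root of unity. -/
def zeta (d : ℕ) : ℂ := Complex.exp (Real.pi * Complex.I / d)

/-- `eps p j = e^{2πij/p}`, a `p`-th root of unity. -/
def eps (p : ℕ) (j : ℤ) : ℂ := Complex.exp (2 * Real.pi * Complex.I * j / p)

/-- The Legendre sequence of length `p` (for `p` an odd prime). -/
def legendreSeq (p : ℕ) : ℤ → ℝ :=
  fun i => if 0 ≤ i ∧ i < p then (if i = 0 then 1 else (jacobiSym i p : ℝ)) else 0

/-- The ternary Legendre sequence of length `p` (for `p` an odd prime). -/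
def ternaryLegendreSeq (p : ℕ) : ℤ → ℝ :=
  fun i => if 0 ≤ i ∧ i < p then (jacobiSym i p : ℝ) else 0

section CharacterSums

lemma sum_mul_sum_mul_sum_mul_sum {ι R : Type*} [Fintype ι] [CommSemiring R] (a b c d : ι → R) :
    (∑ i, a i) * (∑ i, b i) * (∑ i, c i) * (∑ i, d i) =
      ∑ i, ∑ j, ∑ k, ∑ l, a i * b j * c k * d l := by
  simp only [← Finset.mul_sum, ← Finset.sum_mul]

variable {F : Type*} [Field F]

/-- The value at `t` of the polynomial of degree at most three with coefficient vector `c`. -/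
def cubicEval (c : F × F × F × F) (t : F) : F :=
  c.1 + c.2.1 * t + c.2.2.1 * t ^ 2 + c.2.2.2 * t ^ 3

/-- The coefficient vector of `e * (t - r₁) * (t - r₂) * (t - r₃)`. -/
def cubicOfRoots (e r₁ r₂ r₃ : F) : F × F × F × F :=
  (-(e * r₁ * r₂ * r₃), e * (r₁ * r₂ + r₁ * r₃ + r₂ * r₃), -(e * (r₁ + r₂ + r₃)), e)

lemma cubicEval_cubicOfRoots (e r₁ r₂ r₃ t : F) :
    cubicEval (cubicOfRoots e r₁ r₂ r₃) t = e * (t - r₁) * (t - r₂) * (t - r₃) := by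
  simp only [cubicEval, cubicOfRoots]
  ring

lemma cubicEval_add_smul (c h : F × F × F × F) (l t : F) :
    cubicEval (c + l • h) t = cubicEval c t + l * cubicEval h t := by
  simp only [cubicEval, Prod.fst_add, Prod.snd_add, Prod.smul_fst, Prod.smul_snd, smul_eq_mul]
  ring

variable [Fintype F] [DecidableEq F]

lemma abs_quadraticChar_le_one (a : F) : |quadraticChar F a| ≤ 1 := by
  rcases quadraticChar_isQuadratic F a with h | h | h <;> simp [h]

lemma sum_quadraticChar_affine (hF : ringChar F ≠ 2) {a : F} (ha : a ≠ 0) (b : F) :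
    ∑ t, quadraticChar F (b + t * a) = 0 := by
  rw [← quadraticChar_sum_zero hF]
  exact Fintype.sum_equiv ((Equiv.mulRight₀ a ha).trans (Equiv.addLeft b)) _ _ fun t => rfl

lemma sum_cubics_eq_zero (hF : ringChar F ≠ 2) {t₁ t₂ t₃ t₄ : F} (h₂ : t₁ ≠ t₂) (h₃ : t₁ ≠ t₃)
    (h₄ : t₁ ≠ t₄) :
    ∑ c : F × F × F × F, quadraticChar F (cubicEval c t₁) * (quadraticChar F (cubicEval c t₂) *
      quadraticChar F (cubicEval c t₃) * quadraticChar F (cubicEval c t₄)) = 0 := by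
  set f : F × F × F × F → ℤ := fun c => quadraticChar F (cubicEval c t₁) *
    (quadraticChar F (cubicEval c t₂) * quadraticChar F (cubicEval c t₃) *
      quadraticChar F (cubicEval c t₄)) with hf
  set h := cubicOfRoots (1 : F) t₂ t₃ t₄ with hh
  have hshift (l : F) : ∑ c, f (c + l • h) = ∑ c, f c :=
    Fintype.sum_equiv (Equiv.addRight (l • h)) _ _ fun c => rfl
  have hzero : ∑ l : F, ∑ c, f (c + l • h) = 0 := by
    rw [Finset.sum_comm]
    refine Finset.sum_eq_zero fun c _ => ?_
    have h1 : cubicEval h t₁ ≠ 0 := by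
      rw [hh, cubicEval_cubicOfRoots]
      simp [sub_ne_zero, h₂, h₃, h₄]
    have e2 : cubicEval h t₂ = 0 := by rw [hh, cubicEval_cubicOfRoots]; ring
    have e3 : cubicEval h t₃ = 0 := by rw [hh, cubicEval_cubicOfRoots]; ring
    have e4 : cubicEval h t₄ = 0 := by rw [hh, cubicEval_cubicOfRoots]; ring
    simp only [hf, cubicEval_add_smul, e2, e3, e4, mul_zero, add_zero]
    rw [← Finset.sum_mul, sum_quadraticChar_affine hF h1, zero_mul]
  simp only [hshift, Finset.sum_const, Finset.card_univ, nsmul_eq_mul] at hzero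
  exact (mul_eq_zero.mp hzero).resolve_left (by exact_mod_cast Fintype.card_ne_zero)

lemma abs_sum_cubics_le (hF : ringChar F ≠ 2) (t₁ t₂ t₃ t₄ : F) :
    |∑ c : F × F × F × F, quadraticChar F (cubicEval c t₁) * quadraticChar F (cubicEval c t₂) *
      quadraticChar F (cubicEval c t₃) * quadraticChar F (cubicEval c t₄)| ≤
    (Fintype.card F : ℤ) ^ 4 * ((if t₁ = t₂ then 1 else 0) * (if t₃ = t₄ then 1 else 0) +
      (if t₁ = t₃ then 1 else 0) * (if t₂ = t₄ then 1 else 0) +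
      (if t₁ = t₄ then 1 else 0) * (if t₂ = t₃ then 1 else 0)) := by
  have htriv : |∑ c : F × F × F × F, quadraticChar F (cubicEval c t₁) *
      quadraticChar F (cubicEval c t₂) * quadraticChar F (cubicEval c t₃) *
      quadraticChar F (cubicEval c t₄)| ≤ (Fintype.card F : ℤ) ^ 4 := by
    refine (Finset.abs_sum_le_sum_abs _ _).trans ?_
    refine (Finset.sum_le_sum (g := fun _ => 1) fun c _ => ?_).trans ?_
    · simp only [abs_mul]
      have h := fun t => abs_quadraticChar_le_one (cubicEval c t)
      have := mul_le_one₀ (mul_le_one₀ (mul_le_one₀ (h t₁) (abs_nonneg _) (h t₂)) (abs_nonneg _)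
        (h t₃)) (abs_nonneg _) (h t₄)
      exact this
    · simp only [Finset.sum_const, Finset.card_univ, Fintype.card_prod, nsmul_eq_mul]
      apply le_of_eq
      push_cast
      ring
  have hq : (0 : ℤ) ≤ (Fintype.card F : ℤ) ^ 4 := by positivity
  by_cases h1 : t₁ ≠ t₂ ∧ t₁ ≠ t₃ ∧ t₁ ≠ t₄
  · have := sum_cubics_eq_zero hF h1.1 h1.2.1 h1.2.2
    simp only [← mul_assoc] at this
    rw [this, abs_zero]
    positivity
  by_cases h2 : t₂ ≠ t₁ ∧ t₂ ≠ t₃ ∧ t₂ ≠ t₄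
  · have := sum_cubics_eq_zero hF h2.1 h2.2.1 h2.2.2
    rw [Finset.sum_congr rfl (g := fun c => quadraticChar F (cubicEval c t₂) *
      (quadraticChar F (cubicEval c t₁) * quadraticChar F (cubicEval c t₃) *
      quadraticChar F (cubicEval c t₄))) (fun c _ => by ring), this, abs_zero]
    positivity
  by_cases h3 : t₃ ≠ t₁ ∧ t₃ ≠ t₂ ∧ t₃ ≠ t₄
  · have := sum_cubics_eq_zero hF h3.1 h3.2.1 h3.2.2
    rw [Finset.sum_congr rfl (g := fun c => quadraticChar F (cubicEval c t₃) *
      (quadraticChar F (cubicEval c t₁) * quadraticChar F (cubicEval c t₂) *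
      quadraticChar F (cubicEval c t₄))) (fun c _ => by ring), this, abs_zero]
    positivity
  by_cases h4 : t₄ ≠ t₁ ∧ t₄ ≠ t₂ ∧ t₄ ≠ t₃
  · have := sum_cubics_eq_zero hF h4.1 h4.2.1 h4.2.2
    rw [Finset.sum_congr rfl (g := fun c => quadraticChar F (cubicEval c t₄) *
      (quadraticChar F (cubicEval c t₁) * quadraticChar F (cubicEval c t₂) *
      quadraticChar F (cubicEval c t₃))) (fun c _ => by ring), this, abs_zero]
    positivity
  refine htriv.trans (le_mul_of_one_le_right hq ?_)
  have h : (t₁ = t₂ ∧ t₃ = t₄) ∨ (t₁ = t₃ ∧ t₂ = t₄) ∨ (t₁ = t₄ ∧ t₂ = t₃) := by grind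
  rcases h with h | h | h <;> simp only [h, if_true] <;> split_ifs <;> simp

lemma fourth_moment_cubics_le (hF : ringChar F ≠ 2) :
    ∑ c : F × F × F × F, (∑ t, quadraticChar F (cubicEval c t)) ^ 4 ≤
      3 * (Fintype.card F : ℤ) ^ 6 := by
  calc ∑ c : F × F × F × F, (∑ t, quadraticChar F (cubicEval c t)) ^ 4
      = ∑ t₁, ∑ t₂, ∑ t₃, ∑ t₄, ∑ c : F × F × F × F, quadraticChar F (cubicEval c t₁) *
        quadraticChar F (cubicEval c t₂) * quadraticChar F (cubicEval c t₃) *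
        quadraticChar F (cubicEval c t₄) := by
        rw [Finset.sum_congr rfl (g := fun c => ∑ t₁, ∑ t₂, ∑ t₃, ∑ t₄,
          quadraticChar F (cubicEval c t₁) * quadraticChar F (cubicEval c t₂) *
          quadraticChar F (cubicEval c t₃) * quadraticChar F (cubicEval c t₄))]
        · rw [Finset.sum_comm]
          refine Finset.sum_congr rfl fun t₁ _ => ?_
          rw [Finset.sum_comm]
          refine Finset.sum_congr rfl fun t₂ _ => ?_
          rw [Finset.sum_comm]
          refine Finset.sum_congr rfl fun t₃ _ => ?_
          rw [Finset.sum_comm]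
        · intro c _
          rw [← sum_mul_sum_mul_sum_mul_sum]
          ring
    _ ≤ ∑ t₁ : F, ∑ t₂ : F, ∑ t₃ : F, ∑ t₄ : F, (Fintype.card F : ℤ) ^ 4 *
        ((if t₁ = t₂ then 1 else 0) * (if t₃ = t₄ then 1 else 0) +
        (if t₁ = t₃ then 1 else 0) * (if t₂ = t₄ then 1 else 0) +
        (if t₁ = t₄ then 1 else 0) * (if t₂ = t₃ then 1 else 0)) := by
        gcongr with t₁ _ t₂ _ t₃ _ t₄ _
        exact (le_abs_self _).trans (abs_sum_cubics_le hF t₁ t₂ t₃ t₄)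
    _ = 3 * (Fintype.card F : ℤ) ^ 6 := by
        simp only [mul_add, Finset.sum_add_distrib, ← Finset.mul_sum]
        simp
        ring

lemma sum_cubicOfRoots_pow_four {e δ : F} (he : e ≠ 0) (hδ : δ ≠ 0) (r κ : F) :
    (∑ t, quadraticChar F (cubicEval (cubicOfRoots e r (r + δ) (r + κ * δ)) t)) ^ 4 =
      (∑ t, quadraticChar F (t * (t - 1) * (t - κ))) ^ 4 := by
  have h : ∑ t, quadraticChar F (cubicEval (cubicOfRoots e r (r + δ) (r + κ * δ)) t) =
      quadraticChar F (e * δ ^ 3) * ∑ t, quadraticChar F (t * (t - 1) * (t - κ)) := by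
    rw [Finset.mul_sum]
    symm
    refine Fintype.sum_equiv ((Equiv.mulRight₀ δ hδ).trans (Equiv.addLeft r)) _ _ fun t => ?_
    rw [← map_mul, cubicEval_cubicOfRoots]
    congr 1
    simp only [Equiv.trans_apply, Equiv.mulRight₀_apply, Equiv.coe_addLeft]
    ring
  have h4 : quadraticChar F (e * δ ^ 3) ^ 4 = 1 := by
    have := quadraticChar_sq_one (F := F) (a := e * δ ^ 3) (mul_ne_zero he (pow_ne_zero _ hδ))
    calc _ = (quadraticChar F (e * δ ^ 3) ^ 2) ^ 2 := by ring
      _ = 1 := by rw [this, one_pow]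
  rw [h, mul_pow, h4, one_mul]

/-- Mordell's bound for the character sum attached to a cubic in Legendre form. -/
lemma legendreForm_sum_pow_four_le (hF : ringChar F ≠ 2) (κ : F) :
    (∑ t, quadraticChar F (t * (t - 1) * (t - κ))) ^ 4 ≤ 108 * (Fintype.card F : ℤ) ^ 3 := by
  set T := ∑ t, quadraticChar F (t * (t - 1) * (t - κ)) with hT
  set q := (Fintype.card F : ℤ) with hq
  have hT0 : 0 ≤ T ^ 4 := by positivity
  let g : F × F × F → F × F × F × F :=
    fun x => cubicOfRoots x.1 x.2.1 (x.2.1 + x.2.2) (x.2.1 + κ * x.2.2)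
  let S : Finset (F × F × F) := {0}ᶜ ×ˢ (Finset.univ ×ˢ {0}ᶜ)
  have hScard : (S.card : ℤ) = (q - 1) * (q * (q - 1)) := by
    simp only [S, Finset.card_product, Finset.card_compl, Finset.card_singleton, Finset.card_univ]
    rw [Nat.cast_mul, Nat.cast_mul, Nat.cast_sub Fintype.card_pos]
    simp [hq]
  have hfib : S.card ≤ 9 * (S.image g).card := by
    refine Finset.card_le_mul_card_image S 9 fun c hc => ?_
    obtain ⟨⟨e₀, r₀, δ₀⟩, h0, rfl⟩ := Finset.mem_image.mp hc
    let R : Finset F := {r₀, r₀ + δ₀, r₀ + κ * δ₀}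
    have hR : R.card ≤ 3 := Finset.card_le_three
    have hinj : ({a ∈ S | g a = g (e₀, r₀, δ₀)} : Finset _).card ≤ (R ×ˢ R).card := by
      refine Finset.card_le_card_of_injOn (fun x => (x.2.1, x.2.1 + x.2.2)) ?_ ?_
      · rintro ⟨e, r, δ⟩ hx
        simp only [S, Finset.coe_filter, Set.mem_ofPred_eq, Finset.mem_product, Finset.mem_compl,
          Finset.mem_singleton, Finset.mem_univ, true_and] at hx h0
        have hroot (t : F) (ht : e * (t - r) * (t - (r + δ)) * (t - (r + κ * δ)) = 0) : t ∈ R := by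
          rw [← cubicEval_cubicOfRoots] at ht
          have h2 : cubicEval (cubicOfRoots e₀ r₀ (r₀ + δ₀) (r₀ + κ * δ₀)) t = 0 := by
            rw [← ht]; exact congrArg (fun c => cubicEval c t) hx.2.symm
          rw [cubicEval_cubicOfRoots] at h2
          simp only [mul_eq_zero, h0.1, false_or, sub_eq_zero] at h2
          simp only [R, Finset.mem_insert, Finset.mem_singleton]
          tauto
        simp only [Finset.coe_product, Set.mem_prod, Finset.mem_coe]
        exact ⟨hroot _ (by ring), hroot _ (by ring)⟩
      · rintro ⟨e, r, δ⟩ hx ⟨e', r', δ'⟩ hx' hxx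
        simp only [Finset.coe_filter, Set.mem_ofPred_eq] at hx hx'
        have he : e = e' := congrArg (fun c => c.2.2.2) (hx.2.trans hx'.2.symm)
        simp only [Prod.mk.injEq] at hxx ⊢
        obtain ⟨h1, h2⟩ := hxx
        subst h1
        exact ⟨he, rfl, add_left_cancel h2⟩
    refine hinj.trans ?_
    rw [Finset.card_product]
    nlinarith
  have himage : ((S.image g).card : ℤ) * T ^ 4 ≤ 3 * q ^ 6 := by
    refine le_trans ?_ (fourth_moment_cubics_le hF)
    rw [← nsmul_eq_mul, ← Finset.sum_const]
    calc ∑ _c ∈ S.image g, T ^ 4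
        = ∑ c ∈ S.image g, (∑ t, quadraticChar F (cubicEval c t)) ^ 4 := by
          refine Finset.sum_congr rfl fun c hc => ?_
          obtain ⟨⟨e, r, δ⟩, h0, rfl⟩ := Finset.mem_image.mp hc
          simp only [S, Finset.mem_product, Finset.mem_compl, Finset.mem_singleton,
            Finset.mem_univ, true_and] at h0
          exact (sum_cubicOfRoots_pow_four h0.1 h0.2 r κ).symm
      _ ≤ _ := Finset.sum_le_sum_of_subset_of_nonneg (Finset.subset_univ _)
          fun _ _ _ => by positivity
  have hq2 : 2 ≤ q := by
    have := Fintype.one_lt_card (α := F)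
    omega
  have hfib' : (q - 1) * (q * (q - 1)) ≤ 9 * ((S.image g).card : ℤ) := by
    rw [← hScard]; exact_mod_cast hfib
  have h1 : (q - 1) * (q * (q - 1)) * T ^ 4 ≤ 27 * q ^ 6 := by nlinarith
  have h2 : q ^ 2 ≤ 4 * (q - 1) ^ 2 := by nlinarith
  have h3 : q ^ 3 * T ^ 4 ≤ q ^ 3 * (108 * q ^ 3) := by
    calc q ^ 3 * T ^ 4 = q ^ 2 * (q * T ^ 4) := by ring
      _ ≤ 4 * (q - 1) ^ 2 * (q * T ^ 4) := by gcongr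
      _ ≤ _ := by nlinarith
  exact le_of_mul_le_mul_left h3 (by positivity)

lemma cubicOfRoots_sum_pow_four_le (hF : ringChar F ≠ 2) {e r₁ r₂ r₃ : F} (he : e ≠ 0)
    (h₂ : r₁ ≠ r₂) :
    (∑ t, quadraticChar F (e * (t - r₁) * (t - r₂) * (t - r₃))) ^ 4 ≤
      108 * (Fintype.card F : ℤ) ^ 3 := by
  have hδ : r₂ - r₁ ≠ 0 := sub_ne_zero.mpr h₂.symm
  have h := sum_cubicOfRoots_pow_four he hδ r₁ ((r₃ - r₁) / (r₂ - r₁))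
  rw [div_mul_cancel₀ _ hδ, add_sub_cancel, add_sub_cancel] at h
  simp only [cubicEval_cubicOfRoots] at h
  rw [h]
  exact legendreForm_sum_pow_four_le hF _

lemma sum_ne_inv_sub {M : Type*} [AddCommMonoid M] (a : F) (f : F → M) :
    ∑ j ∈ {a}ᶜ, f ((a - j)⁻¹) = ∑ y ∈ {0}ᶜ, f y := by
  refine Finset.sum_nbij' (fun j => (a - j)⁻¹) (fun y => a - y⁻¹) ?_ ?_ ?_ ?_ ?_
  · intro j hj
    simpa [sub_eq_zero, eq_comm] using hj
  · intro y hy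
    simpa [sub_eq_self] using hy
  · intro j _
    simp
  · intro y _
    simp
  · intro j _
    rfl

lemma quadraticChar_mul_eq_of_inv {a j : F} (h : j ≠ a) (b : F) :
    quadraticChar F (b - j) =
      quadraticChar F (a - j) * quadraticChar F (1 + (b - a) * (a - j)⁻¹) := by
  have h' : a - j ≠ 0 := sub_ne_zero.mpr h.symm
  rw [← map_mul]
  congr 1
  field_simp
  ring

lemma sum_quadraticChar_mul (hF : ringChar F ≠ 2) (a b : F) :
    ∑ j, quadraticChar F (a - j) * quadraticChar F (b - j) =
      (if a = b then (Fintype.card F : ℤ) else 0) - 1 := by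
  have hsplit : ∑ j, quadraticChar F (a - j) * quadraticChar F (b - j) =
      ∑ j ∈ {a}ᶜ, quadraticChar F (a - j) * quadraticChar F (b - j) := by
    rw [← Finset.sum_add_sum_compl {a}]
    simp
  have hmain : ∑ j ∈ {a}ᶜ, quadraticChar F (a - j) * quadraticChar F (b - j) =
      ∑ y ∈ {0}ᶜ, quadraticChar F (1 + (b - a) * y) := by
    rw [← sum_ne_inv_sub a fun y => quadraticChar F (1 + (b - a) * y)]
    refine Finset.sum_congr rfl fun j hj => ?_
    have hj : j ≠ a := by simpa using hj
    rw [quadraticChar_mul_eq_of_inv hj b, ← mul_assoc, ← sq,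
      quadraticChar_sq_one (sub_ne_zero.mpr hj.symm), one_mul]
  have hfull := Finset.sum_add_sum_compl {0} fun y => quadraticChar F (1 + (b - a) * y)
  simp only [Finset.sum_singleton, mul_zero, add_zero, map_one] at hfull
  rw [hsplit, hmain]
  split_ifs with hab
  · subst hab
    simp at hfull ⊢
    linarith
  · have := sum_quadraticChar_affine hF (sub_ne_zero.mpr (Ne.symm hab)) 1
    simp only [mul_comm _ (b - a)] at this
    linarith

lemma quartic_sum_eq_cubic_sum {a b c d : F} (hb : a ≠ b) (hc : a ≠ c) (hd : a ≠ d) :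
    ∑ j, quadraticChar F (a - j) * quadraticChar F (b - j) * quadraticChar F (c - j) *
      quadraticChar F (d - j) =
    (∑ y, quadraticChar F ((b - a) * (c - a) * (d - a) * (y - (a - b)⁻¹) * (y - (a - c)⁻¹) *
      (y - (a - d)⁻¹))) - 1 := by
  have hsplit : ∑ j, quadraticChar F (a - j) * quadraticChar F (b - j) * quadraticChar F (c - j) *
      quadraticChar F (d - j) = ∑ j ∈ {a}ᶜ, quadraticChar F (a - j) * quadraticChar F (b - j) *
        quadraticChar F (c - j) * quadraticChar F (d - j) := by
    rw [← Finset.sum_add_sum_compl {a}]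
    simp
  have hb' : a - b ≠ 0 := sub_ne_zero.mpr hb
  have hc' : a - c ≠ 0 := sub_ne_zero.mpr hc
  have hd' : a - d ≠ 0 := sub_ne_zero.mpr hd
  have hform (y : F) : (b - a) * (c - a) * (d - a) * (y - (a - b)⁻¹) * (y - (a - c)⁻¹) *
      (y - (a - d)⁻¹) = (1 + (b - a) * y) * (1 + (c - a) * y) * (1 + (d - a) * y) := by
    have e1 : (b - a) * (y - (a - b)⁻¹) = 1 + (b - a) * y := by
      field_simp
      ring
    have e2 : (c - a) * (y - (a - c)⁻¹) = 1 + (c - a) * y := by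
      field_simp
      ring
    have e3 : (d - a) * (y - (a - d)⁻¹) = 1 + (d - a) * y := by
      field_simp
      ring
    rw [← e1, ← e2, ← e3]
    ring
  have hmain : ∑ j ∈ {a}ᶜ, quadraticChar F (a - j) * quadraticChar F (b - j) *
      quadraticChar F (c - j) * quadraticChar F (d - j) =
      ∑ y ∈ {0}ᶜ, quadraticChar F ((1 + (b - a) * y) * (1 + (c - a) * y) *
        (1 + (d - a) * y)) := by
    rw [← sum_ne_inv_sub a fun y => quadraticChar F ((1 + (b - a) * y) * (1 + (c - a) * y) *
        (1 + (d - a) * y))]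
    refine Finset.sum_congr rfl fun j hj => ?_
    have hj : j ≠ a := by simpa using hj
    have hsq := quadraticChar_sq_one (F := F) (sub_ne_zero.mpr hj.symm)
    rw [quadraticChar_mul_eq_of_inv hj b, quadraticChar_mul_eq_of_inv hj c,
      quadraticChar_mul_eq_of_inv hj d, map_mul, map_mul]
    set z := quadraticChar F (a - j)
    set z₁ := quadraticChar F (1 + (b - a) * (a - j)⁻¹)
    set z₂ := quadraticChar F (1 + (c - a) * (a - j)⁻¹)
    set z₃ := quadraticChar F (1 + (d - a) * (a - j)⁻¹)
    calc _ = (z ^ 2) ^ 2 * (z₁ * z₂ * z₃) := by ring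
      _ = _ := by rw [hsq]; ring
  have hfull := Finset.sum_add_sum_compl {0} fun y => quadraticChar F ((1 + (b - a) * y) *
    (1 + (c - a) * y) * (1 + (d - a) * y))
  simp only [Finset.sum_singleton, mul_zero, add_zero, mul_one, map_one] at hfull
  simp only [hform]
  rw [hsplit, hmain]
  linarith

lemma abs_quartic_sum_sub_le_two (hF : ringChar F ≠ 2) (a c d : F) :
    |(∑ j, quadraticChar F (a - j) * quadraticChar F (a - j) * quadraticChar F (c - j) *
      quadraticChar F (d - j)) - (if c = d then (Fintype.card F : ℤ) else 0)| ≤ 2 := by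
  have h := sum_quadraticChar_mul hF c d
  rw [← Finset.sum_add_sum_compl {a}, Finset.sum_singleton] at h
  have h2 : ∑ j, quadraticChar F (a - j) * quadraticChar F (a - j) * quadraticChar F (c - j) *
      quadraticChar F (d - j) = ∑ j ∈ {a}ᶜ, quadraticChar F (c - j) * quadraticChar F (d - j) := by
    rw [← Finset.sum_add_sum_compl {a}, Finset.sum_singleton, sub_self, MulChar.map_zero]
    simp only [zero_mul, zero_add]
    refine Finset.sum_congr rfl fun j hj => ?_
    have hj : j ≠ a := by simpa using hj
    rw [← sq, quadraticChar_sq_one (sub_ne_zero.mpr hj.symm), one_mul]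
  have h3 : |quadraticChar F (c - a) * quadraticChar F (d - a)| ≤ 1 := by
    rw [abs_mul]
    exact mul_le_one₀ (abs_quadraticChar_le_one _) (abs_nonneg _) (abs_quadraticChar_le_one _)
  rw [abs_le] at h3 ⊢
  rw [h2]
  constructor <;> linarith

/-- The indicator of the quadruples whose entries can be matched in pairs. -/
def pairIndicator (m₁ m₂ m₃ m₄ : F) : ℤ :=
  (if m₁ = m₃ then 1 else 0) * (if m₂ = m₄ then 1 else 0) +
    (if m₁ = m₄ then 1 else 0) * (if m₂ = m₃ then 1 else 0) +
    (if m₁ = m₂ then 1 else 0) * (if m₃ = m₄ then 1 else 0) -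
    2 * ((if m₁ = m₂ then 1 else 0) * (if m₂ = m₃ then 1 else 0) * (if m₃ = m₄ then 1 else 0))

lemma abs_quartic_sum_sub_le (hF : ringChar F ≠ 2) (m₁ m₂ m₃ m₄ : F) :
    |(((∑ j, quadraticChar F (m₁ - j) * quadraticChar F (m₂ - j) * quadraticChar F (m₃ - j) *
      quadraticChar F (m₄ - j)) - (Fintype.card F : ℤ) * pairIndicator m₁ m₂ m₃ m₄ : ℤ) : ℝ)| ≤
      5 * (Fintype.card F : ℝ) ^ (3 / 4 : ℝ) := by
  have hq1 : (1 : ℝ) ≤ (Fintype.card F : ℝ) ^ (3 / 4 : ℝ) :=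
    Real.one_le_rpow (by exact_mod_cast Fintype.card_pos) (by norm_num)
  have hsmall (x : ℤ) (hx : |x| ≤ 2) : |(x : ℝ)| ≤ 5 * (Fintype.card F : ℝ) ^ (3 / 4 : ℝ) := by
    have : |(x : ℝ)| ≤ 2 := by exact_mod_cast hx
    linarith
  by_cases h12 : m₁ = m₂
  · subst h12
    refine hsmall _ (le_of_eq_of_le ?_ (abs_quartic_sum_sub_le_two hF m₁ m₃ m₄))
    congr 2
    grind [pairIndicator]
  by_cases h13 : m₁ = m₃
  · subst h13
    refine hsmall _ (le_of_eq_of_le ?_ (abs_quartic_sum_sub_le_two hF m₁ m₂ m₄))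
    congr 2
    · exact Finset.sum_congr rfl fun j _ => by ring
    · grind [pairIndicator]
  by_cases h14 : m₁ = m₄
  · subst h14
    refine hsmall _ (le_of_eq_of_le ?_ (abs_quartic_sum_sub_le_two hF m₁ m₂ m₃))
    congr 2
    · exact Finset.sum_congr rfl fun j _ => by ring
    · grind [pairIndicator]
  by_cases h23 : m₂ = m₃
  · subst h23
    refine hsmall _ (le_of_eq_of_le ?_ (abs_quartic_sum_sub_le_two hF m₂ m₁ m₄))
    congr 2
    · exact Finset.sum_congr rfl fun j _ => by ring
    · grind [pairIndicator]
  by_cases h24 : m₂ = m₄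
  · subst h24
    refine hsmall _ (le_of_eq_of_le ?_ (abs_quartic_sum_sub_le_two hF m₂ m₁ m₃))
    congr 2
    · exact Finset.sum_congr rfl fun j _ => by ring
    · grind [pairIndicator]
  by_cases h34 : m₃ = m₄
  · subst h34
    refine hsmall _ (le_of_eq_of_le ?_ (abs_quartic_sum_sub_le_two hF m₃ m₁ m₂))
    congr 2
    · exact Finset.sum_congr rfl fun j _ => by ring
    · grind [pairIndicator]
  have hzero : pairIndicator m₁ m₂ m₃ m₄ = 0 := by simp [pairIndicator, h12, h13, h14]
  rw [hzero, mul_zero, sub_zero, quartic_sum_eq_cubic_sum h12 h13 h14]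
  have hbound := cubicOfRoots_sum_pow_four_le hF (e := (m₂ - m₁) * (m₃ - m₁) * (m₄ - m₁))
    (r₁ := (m₁ - m₂)⁻¹) (r₂ := (m₁ - m₃)⁻¹) (r₃ := (m₁ - m₄)⁻¹)
    (by simp [sub_ne_zero, Ne.symm h12, Ne.symm h13, Ne.symm h14])
    (by simpa [sub_right_inj] using h23)
  set T := ∑ t, quadraticChar F ((m₂ - m₁) * (m₃ - m₁) * (m₄ - m₁) * (t - (m₁ - m₂)⁻¹) *
    (t - (m₁ - m₃)⁻¹) * (t - (m₁ - m₄)⁻¹))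
  have hT : |(T : ℝ)| ≤ 4 * (Fintype.card F : ℝ) ^ (3 / 4 : ℝ) := by
    refine le_of_pow_le_pow_left₀ (n := 4) (by norm_num) (by positivity) ?_
    have hpow : ((Fintype.card F : ℝ) ^ (3 / 4 : ℝ)) ^ 4 = (Fintype.card F : ℝ) ^ 3 := by
      rw [← Real.rpow_natCast, ← Real.rpow_mul (by positivity)]
      norm_num
    have hb : (T : ℝ) ^ 4 ≤ 108 * (Fintype.card F : ℝ) ^ 3 := by exact_mod_cast hbound
    rw [mul_pow, hpow, Even.pow_abs (by decide)]
    have : (0 : ℝ) ≤ (Fintype.card F : ℝ) ^ 3 := by positivity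
    linarith
  push_cast
  have := abs_sub (T : ℝ) 1
  rw [abs_one] at this
  linarith

end CharacterSums

section FourierAnalysis

open ComplexConjugate

lemma norm_pow_four_sum {ι : Type*} [Fintype ι] (f : ι → ℂ) :
    ((‖∑ m, f m‖ ^ 4 : ℝ) : ℂ) =
      ∑ m₁, ∑ m₂, ∑ m₃, ∑ m₄, f m₁ * f m₂ * conj (f m₃) * conj (f m₄) := by
  rw [← sum_mul_sum_mul_sum_mul_sum, ← map_sum]
  have := Complex.mul_conj' (∑ m, f m)
  push_cast
  calc _ = ((‖∑ m, f m‖ : ℂ) ^ 2) ^ 2 := by ring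
    _ = _ := by rw [← this]; ring

variable {F : Type*} [Field F] [Fintype F]

/-- The Fourier transform of `b` with respect to the additive character `ψ`. -/
def charTransform (ψ : AddChar F ℂ) (b : F → ℂ) (m : F) : ℂ := ∑ x, b x * ψ (x * m)

/-- The periodic autocorrelation of a complex-valued function on `F`. -/
def periodicCorr (b : F → ℂ) (u : F) : ℂ := ∑ x, b (x + u) * conj (b x)

lemma conj_charTransform (ψ : AddChar F ℂ) (b : F → ℂ) (m : F) :
    conj (charTransform ψ b m) = charTransform ψ (fun x => conj (b (-x))) m := by
  simp only [charTransform, map_sum, map_mul, ← AddChar.map_neg_eq_conj]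
  exact Fintype.sum_equiv (Equiv.neg F) _ _ fun x => by simp

lemma charTransform_mul_conj (ψ : AddChar F ℂ) (b : F → ℂ) (m : F) :
    charTransform ψ b m * conj (charTransform ψ b m) = charTransform ψ (periodicCorr b) m := by
  simp only [charTransform, periodicCorr, map_sum, map_mul, ← AddChar.map_neg_eq_conj]
  rw [Finset.sum_mul_sum]
  simp only [Finset.sum_mul]
  rw [Finset.sum_comm, Finset.sum_comm (f := fun u x => b (x + u) * conj (b x) * ψ (u * m))]
  refine Finset.sum_congr rfl fun x _ => ?_
  symm
  refine Fintype.sum_equiv (Equiv.addLeft x) _ _ fun u => ?_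
  have : ψ (u * m) = ψ ((x + u) * m) * ψ (-(x * m)) := by
    rw [← AddChar.map_add_eq_mul]
    congr 1
    ring
  simp only [Equiv.coe_addLeft, this]
  ring

lemma sum_charTransform_mul {ψ : AddChar F ℂ} (hψ : ψ.IsPrimitive) (b c : F → ℂ) :
    ∑ m, charTransform ψ b m * charTransform ψ c m =
      (Fintype.card F : ℂ) * ∑ x, b x * c (-x) := by
  classical
  simp only [charTransform, Finset.sum_mul_sum]
  rw [Finset.sum_comm, Finset.mul_sum]
  refine Finset.sum_congr rfl fun x _ => ?_
  rw [Finset.sum_comm]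
  have h (y : F) : ∑ m, b x * ψ (x * m) * (c y * ψ (y * m)) =
      if y = -x then (Fintype.card F : ℂ) * (b x * c (-x)) else 0 := by
    have h1 : ∑ m, ψ (m * (x + y)) = if y = -x then (Fintype.card F : ℂ) else 0 := by
      rw [AddChar.sum_mulShift _ hψ]
      simp [add_comm x y, add_eq_zero_iff_eq_neg]
    calc _ = b x * c y * ∑ m, ψ (m * (x + y)) := by
          rw [Finset.mul_sum]
          refine Finset.sum_congr rfl fun m _ => ?_
          rw [mul_add, AddChar.map_add_eq_mul, mul_comm m x, mul_comm m y]
          ring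
      _ = _ := by
          rw [h1]
          split_ifs with hy
          · rw [hy]; ring
          · simp
  simp [h]

lemma sum_norm_sq_charTransform {ψ : AddChar F ℂ} (hψ : ψ.IsPrimitive) (b : F → ℂ) :
    ∑ m, ‖charTransform ψ b m‖ ^ 2 = (Fintype.card F : ℝ) * ∑ x, ‖b x‖ ^ 2 := by
  have h := sum_charTransform_mul hψ b (fun x => conj (b (-x)))
  simp only [← conj_charTransform, neg_neg, Complex.mul_conj'] at h
  exact_mod_cast h

lemma sum_norm_pow_four_charTransform {ψ : AddChar F ℂ} (hψ : ψ.IsPrimitive) (b : F → ℂ) :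
    ∑ m, ‖charTransform ψ b m‖ ^ 4 = (Fintype.card F : ℝ) * ∑ u, ‖periodicCorr b u‖ ^ 2 := by
  rw [← sum_norm_sq_charTransform hψ]
  refine Finset.sum_congr rfl fun m _ => ?_
  rw [← charTransform_mul_conj, norm_mul, RCLike.norm_conj]
  ring

variable [DecidableEq F]

lemma exists_gauss_factor (hF : ringChar F ≠ 2) {ψ : AddChar F ℂ} (hψ : ψ.IsPrimitive) :
    ∃ G : ℂ, ‖G‖ ^ 2 = Fintype.card F ∧
      ∀ y, G * (quadraticChar F y : ℂ) = ∑ k, (quadraticChar F k : ℂ) * ψ (k * y) := by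
  set χ : MulChar F ℂ := (quadraticChar F).ringHomComp (Int.castRingHom ℂ) with hχ
  have happ (a : F) : χ a = (quadraticChar F a : ℂ) := rfl
  have hquad : χ.IsQuadratic := (quadraticChar_isQuadratic F).comp _
  have hne : χ ≠ 1 :=
    (MulChar.ringHomComp_ne_one_iff (Int.castRingHom ℂ).injective_int).mpr
      (quadraticChar_ne_one hF)
  refine ⟨gaussSum χ ψ, ?_, fun y => ?_⟩
  · have h := congrArg norm (gaussSum_sq hne hquad hψ)
    have h1 : ‖χ (-1)‖ = 1 := by
      rcases quadraticChar_dichotomy (F := F) (a := -1) (by simp) with h | h <;> simp [happ, h]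
    rwa [norm_pow, norm_mul, h1, one_mul, Complex.norm_natCast] at h
  · by_cases hy : y = 0
    · subst hy
      have := quadraticChar_sum_zero hF
      simp only [MulChar.map_zero, Int.cast_zero, mul_zero, AddChar.map_zero_eq_one, mul_one]
      exact_mod_cast this.symm
    · have h := gaussSum_mulShift χ ψ (Units.mk0 y hy)
      rw [Units.val_mk0] at h
      rw [← h, ← happ]
      have hsq : χ y * χ y = 1 := by
        rw [happ]
        exact_mod_cast (sq _).symm.trans (quadraticChar_sq_one hy)
      rw [mul_right_comm, hsq, one_mul]
      simp only [gaussSum, AddChar.mulShift_apply, happ, mul_comm y]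

lemma gauss_mul_charTransform {ψ : AddChar F ℂ} {G : ℂ}
    (hG : ∀ y, G * (quadraticChar F y : ℂ) = ∑ k, (quadraticChar F k : ℂ) * ψ (k * y))
    (v : F → ℂ) (j : F) :
    G * charTransform ψ (fun y => (quadraticChar F y : ℂ) * v y) j =
      ∑ m, (quadraticChar F (m - j) : ℂ) * charTransform ψ v m := by
  simp only [charTransform, Finset.mul_sum, ← mul_assoc, hG]
  rw [Finset.sum_comm]
  refine Finset.sum_congr rfl fun y _ => ?_
  rw [Finset.sum_mul, Finset.sum_mul]
  refine Fintype.sum_equiv (Equiv.addRight j) _ _ fun k => ?_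
  simp only [Equiv.coe_addRight, add_sub_cancel_right]
  rw [mul_add, AddChar.map_add_eq_mul, mul_comm y k]
  ring

lemma sum_pairIndicator {ι : Type*} [Fintype ι] [DecidableEq ι] (V : ι → ℂ) :
    ∑ m₁, ∑ m₂, ∑ m₃, ∑ m₄, V m₁ * V m₂ * conj (V m₃) * conj (V m₄) *
      (pairIndicator m₁ m₂ m₃ m₄ : ℂ) =
    ((2 * (∑ m, ‖V m‖ ^ 2) ^ 2 + ‖∑ m, V m ^ 2‖ ^ 2 - 2 * ∑ m, ‖V m‖ ^ 4 : ℝ) : ℂ) := by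
  have e2 (z : ℂ) : (‖z‖ : ℂ) ^ 2 = z * conj z := (Complex.mul_conj' z).symm
  have e4 (z : ℂ) : (‖z‖ : ℂ) ^ 4 = z * z * conj z * conj z := by
    calc _ = ((‖z‖ : ℂ) ^ 2) ^ 2 := by ring
      _ = _ := by rw [e2]; ring
  push_cast
  simp only [e2, e4, map_sum, map_pow]
  have h1 : ∑ m₁, ∑ m₂, ∑ m₃, ∑ m₄, V m₁ * V m₂ * conj (V m₃) * conj (V m₄) *
      ((if m₁ = m₃ then 1 else 0) * (if m₂ = m₄ then 1 else 0)) =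
      (∑ m, V m * conj (V m)) ^ 2 := by
    simp only [mul_ite, mul_one, mul_zero, Finset.sum_ite_eq, Finset.mem_univ, if_true]
    rw [sq, Finset.sum_mul_sum]
    exact Finset.sum_congr rfl fun i _ => Finset.sum_congr rfl fun j _ => by ring
  have h2 : ∑ m₁, ∑ m₂, ∑ m₃, ∑ m₄, V m₁ * V m₂ * conj (V m₃) * conj (V m₄) *
      ((if m₁ = m₄ then 1 else 0) * (if m₂ = m₃ then 1 else 0)) =
      (∑ m, V m * conj (V m)) ^ 2 := by
    rw [sq, Finset.sum_mul_sum]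
    refine Finset.sum_congr rfl fun i _ => Finset.sum_congr rfl fun j _ => ?_
    simp
    ring
  have h3 : ∑ m₁, ∑ m₂, ∑ m₃, ∑ m₄, V m₁ * V m₂ * conj (V m₃) * conj (V m₄) *
      ((if m₁ = m₂ then 1 else 0) * (if m₃ = m₄ then 1 else 0)) =
      (∑ m, V m ^ 2) * ∑ m, conj (V m) ^ 2 := by
    rw [Finset.sum_mul_sum]
    refine Finset.sum_congr rfl fun i _ => ?_
    rw [Finset.sum_comm]
    refine Finset.sum_congr rfl fun j _ => ?_
    simp
    ring
  have h4 : ∑ m₁, ∑ m₂, ∑ m₃, ∑ m₄, V m₁ * V m₂ * conj (V m₃) * conj (V m₄) *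
      ((if m₁ = m₂ then 1 else 0) * (if m₂ = m₃ then 1 else 0) * (if m₃ = m₄ then 1 else 0)) =
      ∑ m, V m * V m * conj (V m) * conj (V m) := by
    refine Finset.sum_congr rfl fun i _ => ?_
    simp
  rw [← h4]
  conv_rhs => rw [two_mul, ← h3, ← h1]
  nth_rw 2 [h1]
  rw [← h2]
  simp only [Finset.mul_sum, ← Finset.sum_add_distrib, ← Finset.sum_sub_distrib]
  refine Finset.sum_congr rfl fun m₁ _ => Finset.sum_congr rfl fun m₂ _ =>
    Finset.sum_congr rfl fun m₃ _ => Finset.sum_congr rfl fun m₄ _ => ?_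
  simp only [pairIndicator]
  push_cast
  ring

lemma abs_sum_norm_pow_four_sub_le (hF : ringChar F ≠ 2) (V : F → ℂ) :
    |(∑ j, ‖∑ m, (quadraticChar F (m - j) : ℂ) * V m‖ ^ 4) - (Fintype.card F : ℝ) *
      (2 * (∑ m, ‖V m‖ ^ 2) ^ 2 + ‖∑ m, V m ^ 2‖ ^ 2 - 2 * ∑ m, ‖V m‖ ^ 4)| ≤
      5 * (Fintype.card F : ℝ) ^ (3 / 4 : ℝ) * (∑ m, ‖V m‖) ^ 4 := by
  set Q : F → F → F → F → ℤ := fun m₁ m₂ m₃ m₄ =>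
    ∑ j, quadraticChar F (m₁ - j) * quadraticChar F (m₂ - j) * quadraticChar F (m₃ - j) *
      quadraticChar F (m₄ - j) with hQ
  have hexp : ((∑ j, ‖∑ m, (quadraticChar F (m - j) : ℂ) * V m‖ ^ 4 : ℝ) : ℂ) =
      ∑ m₁, ∑ m₂, ∑ m₃, ∑ m₄, V m₁ * V m₂ * conj (V m₃) * conj (V m₄) *
        (Q m₁ m₂ m₃ m₄ : ℂ) := by
    rw [Complex.ofReal_sum]
    simp only [norm_pow_four_sum]
    rw [Finset.sum_comm]
    refine Finset.sum_congr rfl fun m₁ _ => ?_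
    rw [Finset.sum_comm]
    refine Finset.sum_congr rfl fun m₂ _ => ?_
    rw [Finset.sum_comm]
    refine Finset.sum_congr rfl fun m₃ _ => ?_
    rw [Finset.sum_comm]
    refine Finset.sum_congr rfl fun m₄ _ => ?_
    simp only [hQ]
    push_cast
    rw [Finset.mul_sum]
    refine Finset.sum_congr rfl fun j _ => ?_
    simp only [map_mul, map_intCast]
    ring
  have hdiff : (((∑ j, ‖∑ m, (quadraticChar F (m - j) : ℂ) * V m‖ ^ 4) - (Fintype.card F : ℝ) *
      (2 * (∑ m, ‖V m‖ ^ 2) ^ 2 + ‖∑ m, V m ^ 2‖ ^ 2 - 2 * ∑ m, ‖V m‖ ^ 4) : ℝ) : ℂ) =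
      ∑ m₁, ∑ m₂, ∑ m₃, ∑ m₄, V m₁ * V m₂ * conj (V m₃) * conj (V m₄) *
        ((Q m₁ m₂ m₃ m₄ - (Fintype.card F : ℤ) * pairIndicator m₁ m₂ m₃ m₄ : ℤ) : ℂ) := by
    rw [Complex.ofReal_sub, hexp, Complex.ofReal_mul, ← sum_pairIndicator]
    simp only [Finset.mul_sum, ← Finset.sum_sub_distrib]
    refine Finset.sum_congr rfl fun m₁ _ => Finset.sum_congr rfl fun m₂ _ =>
      Finset.sum_congr rfl fun m₃ _ => Finset.sum_congr rfl fun m₄ _ => ?_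
    push_cast
    ring
  rw [← Real.norm_eq_abs, ← Complex.norm_real, hdiff]
  have hpow : (∑ m, ‖V m‖) ^ 4 =
      ∑ m₁, ∑ m₂, ∑ m₃, ∑ m₄, ‖V m₁‖ * ‖V m₂‖ * ‖V m₃‖ * ‖V m₄‖ := by
    rw [← sum_mul_sum_mul_sum_mul_sum]
    ring
  rw [hpow]
  simp only [Finset.mul_sum]
  refine norm_sum_le_of_le _ fun m₁ _ => norm_sum_le_of_le _ fun m₂ _ =>
    norm_sum_le_of_le _ fun m₃ _ => norm_sum_le_of_le _ fun m₄ _ => ?_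
  rw [norm_mul, norm_mul, norm_mul, norm_mul, RCLike.norm_conj, RCLike.norm_conj,
    Complex.norm_intCast, mul_comm]
  gcongr
  exact abs_quartic_sum_sub_le hF m₁ m₂ m₃ m₄

/-- The fourth moment of the Fourier transform of the quadratic character times `v`,
expressed through periodic autocorrelations. -/
lemma abs_sum_periodicCorr_sub_le (hF : ringChar F ≠ 2) {ψ : AddChar F ℂ} (hψ : ψ.IsPrimitive)
    (v : F → ℂ) :
    |(Fintype.card F : ℝ) ^ 3 *
        ∑ u, ‖periodicCorr (fun y => (quadraticChar F y : ℂ) * v y) u‖ ^ 2 -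
      (Fintype.card F : ℝ) ^ 3 * (2 * (∑ x, ‖v x‖ ^ 2) ^ 2 + ‖∑ x, v x * v (-x)‖ ^ 2) +
      2 * (Fintype.card F : ℝ) ^ 2 * ∑ u, ‖periodicCorr v u‖ ^ 2| ≤
      5 * (Fintype.card F : ℝ) ^ (3 / 4 : ℝ) * (∑ m, ‖charTransform ψ v m‖) ^ 4 := by
  obtain ⟨G, hGnorm, hG⟩ := exists_gauss_factor hF hψ
  have h := abs_sum_norm_pow_four_sub_le hF (charTransform ψ v)
  simp only [← gauss_mul_charTransform hG, norm_mul, mul_pow] at h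
  have hsq : ∑ m, charTransform ψ v m ^ 2 = (Fintype.card F : ℂ) * ∑ x, v x * v (-x) := by
    rw [← sum_charTransform_mul hψ]
    simp only [sq]
  have hG4 : ‖G‖ ^ 4 = (Fintype.card F : ℝ) ^ 2 := by rw [← hGnorm]; ring
  rw [← Finset.mul_sum, hG4, sum_norm_pow_four_charTransform hψ,
    sum_norm_pow_four_charTransform hψ, sum_norm_sq_charTransform hψ, hsq, norm_mul,
    Complex.norm_natCast] at h
  convert h using 2
  ring

end FourierAnalysis

section NegacyclicTwist

open ComplexConjugate

lemma ZMod.sum_val_eq_sum_range {M : Type*} [AddCommMonoid M] (n : ℕ) [NeZero n] (f : ℕ → M) :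
    ∑ x : ZMod n, f x.val = ∑ i ∈ Finset.range n, f i := by
  refine Finset.sum_nbij' (fun x => x.val) (fun i => (i : ZMod n)) ?_ ?_ ?_ ?_ ?_
  · intro x _
    exact Finset.mem_range.mpr x.val_lt
  · intro i _
    exact Finset.mem_univ _
  · intro x _
    exact ZMod.natCast_zmod_val x
  · intro i hi
    exact ZMod.val_cast_of_lt (Finset.mem_range.mp hi)
  · intro x _
    rfl

lemma zeta_pow_self (n : ℕ) [NeZero n] : zeta n ^ n = -1 := by
  rw [zeta, ← Complex.exp_nat_mul, mul_div_cancel₀ _ (NeZero.ne (n : ℂ)), Complex.exp_pi_mul_I]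

lemma norm_zeta (n : ℕ) : ‖zeta n‖ = 1 := by
  have h : (Real.pi * Complex.I / n : ℂ) = ((Real.pi / n : ℝ) : ℂ) * Complex.I := by
    push_cast
    ring
  rw [zeta, h, Complex.norm_exp_ofReal_mul_I]

variable {p : ℕ}

/-- The sign `-1` if adding the standard representatives of `x` and `u` wraps around `p`. -/
def wrapSign (x u : ZMod p) : ℝ := if x.val + u.val < p then 1 else -1

lemma abs_wrapSign (x u : ZMod p) : |wrapSign x u| = 1 := by
  unfold wrapSign
  split_ifs <;> simp

lemma wrapSign_mul_self (x u : ZMod p) : wrapSign x u * wrapSign x u = 1 := by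
  unfold wrapSign
  split_ifs <;> simp

/-- Autocorrelation of the rotation by `r` of `g`, with negacyclic wrap-around. -/
def negacyclicCorr [NeZero p] (r : ZMod p) (g : ZMod p → ℝ) (u : ZMod p) : ℝ :=
  ∑ x, wrapSign (x - r) u * (g (x + u) * g x)

variable [NeZero p]

lemma zeta_pow_val_add (x u : ZMod p) :
    zeta p ^ (x + u).val = wrapSign x u * (zeta p ^ x.val * zeta p ^ u.val) := by
  unfold wrapSign
  rw [← pow_add]
  split_ifs with h
  · rw [ZMod.val_add_of_lt h]
    simp
  · rw [ZMod.val_add_val_of_le (not_lt.mp h), pow_add, zeta_pow_self]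
    simp

lemma sum_wrapSign_left (u : ZMod p) : ∑ x, wrapSign x u = p - 2 * (u.val : ℝ) := by
  have hu := u.val_lt
  unfold wrapSign
  rw [ZMod.sum_val_eq_sum_range p fun i => if i + u.val < p then (1 : ℝ) else -1]
  have hite (i : ℕ) : (if i + u.val < p then (1 : ℝ) else -1) =
      2 * (if i + u.val < p then 1 else 0) - 1 := by split_ifs <;> norm_num
  have hfilter : (Finset.range p).filter (fun i => i + u.val < p) = Finset.range (p - u.val) := by
    ext i
    simp only [Finset.mem_filter, Finset.mem_range]
    omega
  simp only [hite, Finset.sum_sub_distrib, ← Finset.mul_sum, Finset.sum_boole, hfilter,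
    Finset.card_range, Finset.sum_const, nsmul_eq_mul, mul_one, Nat.cast_sub hu.le]
  ring

lemma wrapSign_sub_self (q x : ZMod p) :
    wrapSign (q - x) x = if x.val < q.val + 1 then 1 else -1 := by
  unfold wrapSign
  refine if_congr ?_ rfl rfl
  have h1 := (q - x).val_lt
  constructor
  · intro h
    have := ZMod.val_add_of_lt h
    rw [sub_add_cancel] at this
    omega
  · intro h
    by_contra hc
    have := ZMod.val_add_val_of_le (not_lt.mp hc)
    rw [sub_add_cancel] at this
    omega

lemma sum_wrapSign_sub_self (q : ZMod p) :
    ∑ x, wrapSign (q - x) x = 2 * ((q.val : ℝ) + 1) - p := by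
  have hq := q.val_lt
  simp only [wrapSign_sub_self]
  rw [ZMod.sum_val_eq_sum_range p fun i => if i < q.val + 1 then (1 : ℝ) else -1]
  have hite (i : ℕ) : (if i < q.val + 1 then (1 : ℝ) else -1) =
      2 * (if i < q.val + 1 then 1 else 0) - 1 := by split_ifs <;> norm_num
  have hfilter : (Finset.range p).filter (fun i => i < q.val + 1) =
      Finset.range (q.val + 1) := by
    ext i
    simp only [Finset.mem_filter, Finset.mem_range]
    omega
  simp only [hite, Finset.sum_sub_distrib, ← Finset.mul_sum, Finset.sum_boole, hfilter,
    Finset.card_range, Finset.sum_const, nsmul_eq_mul, mul_one]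
  push_cast
  ring

lemma sum_range_sub_two_mul_sq (n : ℕ) (c : ℝ) :
    ∑ i ∈ Finset.range n, (c - 2 * (i : ℝ)) ^ 2 =
      n * c ^ 2 - 2 * c * (n * (n - 1)) + 2 / 3 * (n * (n - 1) * (2 * n - 1)) := by
  induction n with
  | zero => simp
  | succ n ih =>
    rw [Finset.sum_range_succ, ih]
    push_cast
    ring

lemma norm_periodicCorr_twist [Fact p.Prime] (r : ZMod p) (g : ZMod p → ℝ) (u : ZMod p) :
    ‖periodicCorr (fun y => (g y : ℂ) * zeta p ^ (y - r).val) u‖ ^ 2 =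
      negacyclicCorr r g u ^ 2 := by
  have h : periodicCorr (fun y => (g y : ℂ) * zeta p ^ (y - r).val) u =
      zeta p ^ u.val * (negacyclicCorr r g u : ℂ) := by
    simp only [periodicCorr, negacyclicCorr, Complex.ofReal_sum, Finset.mul_sum]
    refine Finset.sum_congr rfl fun x _ => ?_
    rw [add_sub_right_comm, zeta_pow_val_add, map_mul, Complex.conj_ofReal]
    have h1 : zeta p ^ (x - r).val * conj (zeta p ^ (x - r).val) = 1 := by
      rw [Complex.mul_conj', norm_pow, norm_zeta]
      simp
    push_cast
    linear_combination (wrapSign (x - r) u * (g (x + u) * g x) * zeta p ^ u.val : ℂ) * h1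
  rw [h, norm_mul, norm_pow, norm_zeta, one_pow, one_mul, Complex.norm_real, Real.norm_eq_abs,
    sq_abs]

lemma norm_sum_twist_mul_neg (r : ZMod p) :
    ‖∑ x : ZMod p, zeta p ^ (x - r).val * zeta p ^ (-x - r).val‖ ^ 2 =
      (2 * (((-2 * r : ZMod p).val : ℝ) + 1) - p) ^ 2 := by
  have h : ∑ x : ZMod p, zeta p ^ (x - r).val * zeta p ^ (-x - r).val =
      zeta p ^ (-2 * r : ZMod p).val * ((∑ x, wrapSign (-2 * r - x) x : ℝ) : ℂ) := by
    rw [Complex.ofReal_sum, Finset.mul_sum]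
    refine Fintype.sum_equiv (Equiv.subRight r) _ _ fun x => ?_
    have h1 := zeta_pow_val_add (-2 * r - (x - r)) (x - r)
    have h2 : -2 * r - (x - r) = -x - r := by ring
    have h3 := wrapSign_mul_self (-x - r) (x - r)
    rw [sub_add_cancel, h2] at h1
    simp only [Equiv.subRight_apply, h2, h1]
    have h3' : (wrapSign (-x - r) (x - r) : ℂ) * wrapSign (-x - r) (x - r) = 1 := by
      exact_mod_cast h3
    linear_combination (-(zeta p ^ (x - r).val * zeta p ^ (-x - r).val)) * h3'
  rw [h, sum_wrapSign_sub_self, norm_mul, norm_pow, norm_zeta, one_pow, one_mul, Complex.norm_real,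
    Real.norm_eq_abs, sq_abs]

lemma two_mul_le_sin_pi_mul {t : ℝ} (h0 : 0 ≤ t) (h1 : t ≤ 1 / 2) :
    2 * t ≤ Real.sin (Real.pi * t) := by
  have hpi := Real.pi_pos
  have h := Real.mul_le_sin (x := Real.pi * t) (by positivity) (by nlinarith)
  rwa [← mul_assoc, div_mul_cancel₀ _ hpi.ne'] at h

lemma inv_sin_pi_mul_le {t : ℝ} (h0 : 0 < t) (h1 : t < 1) :
    (Real.sin (Real.pi * t))⁻¹ ≤ (2 * t)⁻¹ + (2 * (1 - t))⁻¹ := by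
  have ha : 0 ≤ (2 * t)⁻¹ := by positivity
  have hb : 0 ≤ (2 * (1 - t))⁻¹ := inv_nonneg.mpr (by linarith)
  rcases le_total t (1 / 2) with h | h
  · have := inv_anti₀ (by linarith) (two_mul_le_sin_pi_mul h0.le h)
    linarith
  · have h2 := two_mul_le_sin_pi_mul (t := 1 - t) (by linarith) (by linarith)
    have h3 : Real.pi * (1 - t) = Real.pi - Real.pi * t := by ring
    rw [h3, Real.sin_pi_sub] at h2
    have := inv_anti₀ (by linarith) h2
    linarith

lemma norm_charTransform_twist_le [Fact p.Prime] (r m : ZMod p) :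
    ‖charTransform ZMod.stdAddChar (fun y => zeta p ^ (y - r).val) m‖ ≤
      p * ((m.val : ℝ) + 1)⁻¹ + p * ((p : ℝ) - m.val)⁻¹ := by
  have hp0 : (0 : ℝ) < p := by exact_mod_cast Nat.pos_of_ne_zero (NeZero.ne p)
  have hm : (m.val : ℝ) + 1 ≤ p := by exact_mod_cast m.val_lt
  have hm0 : (0 : ℝ) ≤ m.val := by positivity
  set ψ : AddChar (ZMod p) ℂ := ZMod.stdAddChar
  set z : ℂ := zeta p * ψ m with hz
  have hshift : charTransform ψ (fun y => zeta p ^ (y - r).val) m =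
      ψ (r * m) * ∑ i ∈ Finset.range p, z ^ i := by
    rw [← ZMod.sum_val_eq_sum_range p fun i => z ^ i, Finset.mul_sum, charTransform]
    refine Fintype.sum_equiv (Equiv.subRight r) _ _ fun y => ?_
    have hy : y * m = r * m + (y - r).val • m := by
      rw [nsmul_eq_mul, ZMod.natCast_zmod_val]
      ring
    rw [hy, AddChar.map_add_eq_mul, AddChar.map_nsmul_eq_pow, hz, Equiv.subRight_apply, mul_pow]
    ring
  have hzp : z ^ p = -1 := by
    rw [hz, mul_pow, zeta_pow_self, ← AddChar.map_nsmul_eq_pow]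
    simp
  have hgeom := geom_sum_mul z p
  set t : ℝ := (2 * m.val + 1) / (2 * p) with ht
  have hzexp : z = Complex.exp (Complex.I * ((2 * (Real.pi * t) : ℝ) : ℂ)) := by
    have hψm : ψ m = Complex.exp (2 * Real.pi * Complex.I * (m.val : ℤ) / p) := by
      rw [← ZMod.stdAddChar_coe]
      simp [ψ]
    rw [hz, hψm, zeta, ← Complex.exp_add, ht]
    congr 1
    have : (p : ℂ) ≠ 0 := NeZero.ne _
    push_cast
    field_simp
    ring
  have ht0 : 0 < t := by positivity
  have ht1 : t < 1 := by
    rw [ht, div_lt_one (by positivity)]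
    linarith
  have hsin : 0 < Real.sin (Real.pi * t) :=
    Real.sin_pos_of_pos_of_lt_pi (by positivity) (by nlinarith [Real.pi_pos])
  have hznorm : ‖z - 1‖ = 2 * Real.sin (Real.pi * t) := by
    rw [hzexp, Complex.norm_exp_I_mul_ofReal_sub_one, mul_div_cancel_left₀ _ two_ne_zero,
      Real.norm_eq_abs, abs_of_pos (by positivity)]
  have hsum : ‖∑ i ∈ Finset.range p, z ^ i‖ = (Real.sin (Real.pi * t))⁻¹ := by
    have h := congrArg norm hgeom
    rw [norm_mul, hznorm, hzp] at h
    norm_num at h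
    exact eq_inv_of_mul_eq_one_left (by linarith)
  have hψr : ‖ψ (r * m)‖ = 1 := AddChar.norm_apply _ _
  rw [hshift, norm_mul, hψr, one_mul, hsum]
  refine (inv_sin_pi_mul_le ht0 ht1).trans ?_
  have e1 : (2 * t)⁻¹ = p * (2 * (m.val : ℝ) + 1)⁻¹ := by
    rw [ht]
    field_simp
  have e2 : (2 * (1 - t))⁻¹ = p * (2 * ((p : ℝ) - m.val) - 1)⁻¹ := by
    have h3 : 2 * (1 - t) = (2 * ((p : ℝ) - m.val) - 1) / p := by
      rw [ht]
      field_simp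
      ring
    rw [h3, inv_div, div_eq_mul_inv]
  rw [e1, e2]
  exact add_le_add
    (mul_le_mul_of_nonneg_left (inv_anti₀ (by linarith) (by linarith)) hp0.le)
    (mul_le_mul_of_nonneg_left (inv_anti₀ (by linarith) (by linarith)) hp0.le)

lemma sum_norm_charTransform_twist_le [Fact p.Prime] (r : ZMod p) :
    ∑ m, ‖charTransform ZMod.stdAddChar (fun y => zeta p ^ (y - r).val) m‖ ≤
      2 * p * (1 + Real.log p) := by
  refine (Finset.sum_le_sum fun m _ => norm_charTransform_twist_le r m).trans ?_
  have hharm : ∑ i ∈ Finset.range p, ((i : ℝ) + 1)⁻¹ ≤ 1 + Real.log p := by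
    have h := harmonic_le_one_add_log p
    rw [harmonic] at h
    push_cast at h
    exact h
  rw [ZMod.sum_val_eq_sum_range p
    fun i => (p : ℝ) * ((i : ℝ) + 1)⁻¹ + p * ((p : ℝ) - i)⁻¹, Finset.sum_add_distrib,
    ← Finset.mul_sum, ← Finset.mul_sum]
  have hrefl : ∑ i ∈ Finset.range p, ((p : ℝ) - i)⁻¹ =
      ∑ i ∈ Finset.range p, ((i : ℝ) + 1)⁻¹ := by
    rw [← Finset.sum_range_reflect]
    refine Finset.sum_congr rfl fun i hi => ?_
    have hi := Finset.mem_range.mp hi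
    rw [Nat.sub_sub, Nat.cast_sub (by omega)]
    push_cast
    congr 1
    ring
  rw [hrefl]
  nlinarith [(Nat.cast_nonneg p : (0 : ℝ) ≤ p)]

lemma abs_sum_negacyclicCorr_sub_le [Fact p.Prime] (hp : p ≠ 2) (r : ZMod p) :
    |(∑ u ∈ {0}ᶜ, negacyclicCorr r (fun x => (quadraticChar (ZMod p) x : ℝ)) u ^ 2) -
      (p : ℝ) ^ 2 / 3 - (2 * (((-2 * r : ZMod p).val : ℝ) + 1) - p) ^ 2| ≤
      80 * (p : ℝ) ^ (7 / 4 : ℝ) * (1 + Real.log p) ^ 4 + 3 * p := by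
  have hF : ringChar (ZMod p) ≠ 2 := by rwa [ZMod.ringChar_zmod_n]
  have hp1 : (1 : ℝ) ≤ p := by exact_mod_cast (Fact.out : p.Prime).one_lt.le
  have hp0 : (0 : ℝ) < p := by linarith
  have h := abs_sum_periodicCorr_sub_le hF (ZMod.isPrimitive_stdAddChar p)
    (fun y : ZMod p => zeta p ^ (y - r).val)
  have e1 (u : ZMod p) : ‖periodicCorr (fun y => (quadraticChar (ZMod p) y : ℂ) *
      zeta p ^ (y - r).val) u‖ ^ 2 =
      negacyclicCorr r (fun x => (quadraticChar (ZMod p) x : ℝ)) u ^ 2 := by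
    rw [← norm_periodicCorr_twist]
    simp
  have e2 : ∑ u, ‖periodicCorr (fun y : ZMod p => zeta p ^ (y - r).val) u‖ ^ 2 =
      (p : ℝ) ^ 3 / 3 + 2 * p / 3 := by
    have h1 (u : ZMod p) : ‖periodicCorr (fun y : ZMod p => zeta p ^ (y - r).val) u‖ ^ 2 =
        ((p : ℝ) - 2 * u.val) ^ 2 := by
      have h2 := norm_periodicCorr_twist r (fun _ => 1) u
      simp only [Complex.ofReal_one, one_mul] at h2
      rw [h2, negacyclicCorr, ← sum_wrapSign_left]
      simp only [mul_one]
      congr 1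
      exact Fintype.sum_equiv (Equiv.subRight r) _ _ fun x => rfl
    simp only [h1]
    rw [ZMod.sum_val_eq_sum_range p fun i => ((p : ℝ) - 2 * i) ^ 2, sum_range_sub_two_mul_sq]
    ring
  simp only [norm_pow, norm_zeta, one_pow, Finset.sum_const, Finset.card_univ, ZMod.card,
    nsmul_eq_mul, mul_one, e1, e2] at h
  rw [norm_sum_twist_mul_neg] at h
  have hzero : negacyclicCorr r (fun x => (quadraticChar (ZMod p) x : ℝ)) 0 = p - 1 := by
    have h0 := sum_quadraticChar_mul hF (0 : ZMod p) 0
    rw [if_pos rfl, ZMod.card] at h0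
    have h1 : negacyclicCorr r (fun x => (quadraticChar (ZMod p) x : ℝ)) 0 =
        ∑ x : ZMod p, (quadraticChar (ZMod p) x : ℝ) * quadraticChar (ZMod p) x := by
      refine Finset.sum_congr rfl fun x _ => ?_
      simp [wrapSign, ZMod.val_lt]
    rw [h1]
    have h2 : ∑ x : ZMod p, quadraticChar (ZMod p) x * quadraticChar (ZMod p) x = p - 1 := by
      rw [← h0]
      exact Fintype.sum_equiv (Equiv.neg _) _ _ fun x => by simp
    exact_mod_cast h2
  have hsplit := Finset.sum_add_sum_compl {(0 : ZMod p)}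
    fun u => negacyclicCorr r (fun x => (quadraticChar (ZMod p) x : ℝ)) u ^ 2
  rw [Finset.sum_singleton, hzero] at hsplit
  rw [← hsplit] at h
  set N := ∑ u ∈ {(0 : ZMod p)}ᶜ,
    negacyclicCorr r (fun x => (quadraticChar (ZMod p) x : ℝ)) u ^ 2
  set Q := (2 * (((-2 * r : ZMod p).val : ℝ) + 1) - p) ^ 2
  set L := 1 + Real.log p
  have hL : 0 ≤ L := by
    have := Real.log_nonneg hp1
    positivity
  have hlog := sum_norm_charTransform_twist_le r
  have hright : 5 * (p : ℝ) ^ (3 / 4 : ℝ) * (∑ m, ‖charTransform ZMod.stdAddChar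
      (fun y : ZMod p => zeta p ^ (y - r).val) m‖) ^ 4 ≤
      (p : ℝ) ^ 3 * (80 * (p : ℝ) ^ (7 / 4 : ℝ) * L ^ 4) := by
    calc _ ≤ 5 * (p : ℝ) ^ (3 / 4 : ℝ) * (2 * p * L) ^ 4 := by gcongr
      _ = (p : ℝ) ^ 3 * (80 * ((p : ℝ) ^ (3 / 4 : ℝ) * p) * L ^ 4) := by ring
      _ = _ := by
        rw [← Real.rpow_add_one hp0.ne']
        norm_num
  have h2 := h.trans hright
  have h3 : (p : ℝ) ^ 3 * |N - (p : ℝ) ^ 2 / 3 - Q - 2 * p + 7 / 3| ≤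
      (p : ℝ) ^ 3 * (80 * (p : ℝ) ^ (7 / 4 : ℝ) * L ^ 4) := by
    refine le_of_eq_of_le ?_ h2
    rw [← abs_of_pos (show (0 : ℝ) < (p : ℝ) ^ 3 by positivity), ← abs_mul,
      abs_of_pos (show (0 : ℝ) < (p : ℝ) ^ 3 by positivity)]
    congr 1
    ring
  have h4 := le_of_mul_le_mul_left h3 (by positivity)
  rw [abs_le] at h4 ⊢
  constructor <;> linarith

end NegacyclicTwist

section MeritFactor

variable {p : ℕ} [Fact p.Prime]

lemma seqAutocorr_eq_sum {a : ℤ → ℝ} (ha : IsSeq p a) (k : ℤ) :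
    seqAutocorr a k = ∑ y : ZMod p, a y.val * a (y.val + k) := by
  rw [ZMod.sum_val_eq_sum_range p fun i => a i * a (i + k), seqAutocorr,
    finsum_eq_sum_of_support_subset (s := (Finset.range p).map Nat.castEmbedding)]
  · simp
  · intro i hi
    have h := ha i (left_ne_zero_of_mul hi)
    simp only [Finset.coe_map, Finset.coe_range, Set.mem_image, Set.mem_Iio]
    exact ⟨i.toNat, by omega, by simp [h.1]⟩

lemma seqAutocorr_eq_zero {a : ℤ → ℝ} (ha : IsSeq p a) {k : ℤ} (hk : (p : ℤ) ≤ |k|) :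
    seqAutocorr a k = 0 := by
  rw [seqAutocorr_eq_sum ha]
  refine Finset.sum_eq_zero fun y _ => ?_
  have hy := y.val_lt
  by_contra h
  have := ha _ (right_ne_zero_of_mul h)
  rcases abs_cases k with h | h <;> omega

lemma finsum_seqAutocorr_sq {a : ℤ → ℝ} (ha : IsSeq p a) :
    ∑ᶠ u ∈ {u : ℤ | u ≠ 0}, seqAutocorr a u ^ 2 =
      ∑ u ∈ ({0}ᶜ : Finset (ZMod p)),
        (seqAutocorr a u.val ^ 2 + seqAutocorr a ((u.val : ℤ) - p) ^ 2) := by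
  have hinj : Function.Injective fun u : ZMod p => (u.val : ℤ) := fun x y h =>
    ZMod.val_injective p (Int.ofNat_inj.mp h)
  have hinj' : Function.Injective fun u : ZMod p => (u.val : ℤ) - p := fun x y h =>
    hinj (by simpa using h)
  rw [Finset.sum_add_distrib,
    ← Finset.sum_image (f := fun k : ℤ => seqAutocorr a k ^ 2)
      (g := fun u : ZMod p => (u.val : ℤ)) (fun x _ y _ h => hinj h),
    ← Finset.sum_image (f := fun k : ℤ => seqAutocorr a k ^ 2)
      (g := fun u : ZMod p => (u.val : ℤ) - p) (fun x _ y _ h => hinj' h),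
    ← Finset.sum_union]
  · refine finsum_mem_eq_sum_of_inter_support_eq _ ?_
    ext k
    simp only [Set.mem_inter_iff, and_congr_left_iff, Function.mem_support]
    intro hk
    have hlt : |k| < p := by
      by_contra h
      exact hk (by rw [seqAutocorr_eq_zero ha (not_lt.mp h)]; simp)
    simp only [Set.mem_ofPred_eq, Finset.coe_union, Finset.coe_image, Set.mem_union, Set.mem_image,
      Finset.coe_compl, Finset.coe_singleton, Set.mem_compl_iff, Set.mem_singleton_iff]
    have hpos {u : ZMod p} (hu : u ≠ 0) : 0 < u.val :=
      Nat.pos_of_ne_zero fun h => hu ((ZMod.val_eq_zero u).mp h)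
    constructor
    · intro h0
      rw [abs_lt] at hlt
      have hne : (k : ZMod p) ≠ 0 := by
        rw [Ne, ZMod.intCast_zmod_eq_zero_iff_dvd]
        intro hd
        have := Int.eq_zero_of_abs_lt_dvd hd (abs_lt.mpr hlt)
        exact h0 this
      rcases lt_or_gt_of_ne h0 with hneg | hpos'
      · refine Or.inr ⟨(k : ZMod p), hne, ?_⟩
        rw [ZMod.val_intCast, ← Int.add_emod_right, Int.emod_eq_of_lt (by omega) (by omega)]
        ring
      · refine Or.inl ⟨(k : ZMod p), hne, ?_⟩
        rw [ZMod.val_intCast, Int.emod_eq_of_lt (by omega) (by omega)]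
    · rintro (⟨u, hu, rfl⟩ | ⟨u, hu, rfl⟩)
      · have := hpos hu
        omega
      · have := u.val_lt
        omega
  · rw [Finset.disjoint_left]
    intro k h1 h2
    simp only [Finset.mem_image] at h1 h2
    obtain ⟨u, -, rfl⟩ := h1
    obtain ⟨w, -, hw⟩ := h2
    have := w.val_lt
    omega

/-- The sequence of length `p` obtained by rotating the periodic sequence `g` by `r`. -/
def rotatedSeq (r : ℤ) (g : ZMod p → ℝ) (i : ℤ) : ℝ :=
  if 0 ≤ i ∧ i < p then g ((i + r : ℤ) : ZMod p) else 0

lemma isSeq_rotatedSeq (r : ℤ) (g : ZMod p → ℝ) : IsSeq p (rotatedSeq r g) := by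
  intro i hi
  by_contra h
  exact hi (if_neg h)

lemma seqAutocorr_rotatedSeq_val (r : ℤ) (g : ZMod p → ℝ) (u : ZMod p) :
    seqAutocorr (rotatedSeq r g) u.val =
      (∑ x, g (x + u) * g x + negacyclicCorr (r : ZMod p) g u) / 2 := by
  rw [seqAutocorr_eq_sum (isSeq_rotatedSeq r g), negacyclicCorr, ← Finset.sum_add_distrib,
    Finset.sum_div]
  refine Fintype.sum_equiv (Equiv.addRight (r : ZMod p)) _ _ fun y => ?_
  have hy := y.val_lt
  have h1 : rotatedSeq r g y.val = g (y + r) := by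
    rw [rotatedSeq, if_pos (by omega)]
    simp
  have h2 : rotatedSeq r g (y.val + u.val) = if y.val + u.val < p then g (y + r + u) else 0 := by
    rw [rotatedSeq]
    refine if_congr (by omega) ?_ rfl
    push_cast
    simp only [ZMod.natCast_zmod_val]
    congr 1
    ring
  rw [h1, h2]
  simp only [Equiv.coe_addRight, add_sub_cancel_right, wrapSign]
  split_ifs <;> ring

lemma seqAutocorr_rotatedSeq_val_sub (r : ℤ) (g : ZMod p → ℝ) (u : ZMod p) :
    seqAutocorr (rotatedSeq r g) ((u.val : ℤ) - p) =
      (∑ x, g (x + u) * g x - negacyclicCorr (r : ZMod p) g u) / 2 := by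
  rw [seqAutocorr_eq_sum (isSeq_rotatedSeq r g), negacyclicCorr, ← Finset.sum_sub_distrib,
    Finset.sum_div]
  refine Fintype.sum_equiv (Equiv.addRight (r : ZMod p)) _ _ fun y => ?_
  have hy := y.val_lt
  have hu := u.val_lt
  have h1 : rotatedSeq r g y.val = g (y + r) := by
    rw [rotatedSeq, if_pos (by omega)]
    simp
  have h2 : rotatedSeq r g (y.val + ((u.val : ℤ) - p)) =
      if y.val + u.val < p then 0 else g (y + r + u) := by
    rw [rotatedSeq]
    by_cases h : y.val + u.val < p
    · rw [if_neg (by omega), if_pos h]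
    · rw [if_pos (by omega), if_neg h]
      push_cast
      simp only [ZMod.natCast_zmod_val, CharP.cast_eq_zero]
      congr 1
      ring
  rw [h1, h2]
  simp only [Equiv.coe_addRight, add_sub_cancel_right, wrapSign]
  split_ifs <;> ring

lemma finsum_seqAutocorr_sq_rotatedSeq (r : ℤ) (g : ZMod p → ℝ) :
    ∑ᶠ u ∈ {u : ℤ | u ≠ 0}, seqAutocorr (rotatedSeq r g) u ^ 2 =
      (∑ u ∈ ({0}ᶜ : Finset (ZMod p)), (∑ x, g (x + u) * g x) ^ 2 +
        ∑ u ∈ ({0}ᶜ : Finset (ZMod p)), negacyclicCorr (r : ZMod p) g u ^ 2) / 2 := by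
  rw [finsum_seqAutocorr_sq (isSeq_rotatedSeq r g), ← Finset.sum_add_distrib, Finset.sum_div]
  refine Finset.sum_congr rfl fun u _ => ?_
  rw [seqAutocorr_rotatedSeq_val, seqAutocorr_rotatedSeq_val_sub]
  ring

/-- The quadratic character of `ZMod p`, with the value at zero replaced by one. -/
def binaryQuadChar (p : ℕ) [Fact p.Prime] (x : ZMod p) : ℝ :=
  if x = 0 then 1 else quadraticChar (ZMod p) x

lemma seqRotate_legendreSeq (s : ℝ) :
    seqRotate p s (legendreSeq p) = rotatedSeq ⌊(p : ℝ) * s⌋ (binaryQuadChar p) := by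
  have hp0 : (0 : ℤ) < p := by exact_mod_cast (Fact.out : p.Prime).pos
  ext i
  simp only [seqRotate, rotatedSeq, Int.cast_natCast]
  refine if_congr Iff.rfl ?_ rfl
  set k := i + ⌊(p : ℝ) * s⌋
  rw [legendreSeq, if_pos ⟨Int.emod_nonneg _ hp0.ne', Int.emod_lt_of_pos _ hp0⟩, binaryQuadChar,
    ← jacobiSym.mod_left, ← jacobiSym.legendreSym.to_jacobiSym, legendreSym]
  refine if_congr ?_ rfl rfl
  rw [ZMod.intCast_zmod_eq_zero_iff_dvd, Int.dvd_iff_emod_eq_zero]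

lemma abs_weighted_corr_sub_le (c : ZMod p → ℝ) (hc : ∀ x, |c x| ≤ 1) {u : ZMod p} (hu : u ≠ 0) :
    |∑ x, c x * (binaryQuadChar p (x + u) * binaryQuadChar p x) -
      ∑ x, c x * ((quadraticChar (ZMod p) (x + u) : ℝ) * quadraticChar (ZMod p) x)| ≤ 2 := by
  set χ : ZMod p → ℝ := fun x => (quadraticChar (ZMod p) x : ℝ) with hχ
  have hχ1 (x : ZMod p) : |χ x| ≤ 1 := by
    show |((quadraticChar (ZMod p) x : ℤ) : ℝ)| ≤ 1
    exact_mod_cast abs_quadraticChar_le_one x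
  have hb (x : ZMod p) : binaryQuadChar p x = χ x + if x = 0 then 1 else 0 := by
    rw [binaryQuadChar]
    split_ifs with h
    · simp [hχ, h]
    · simp [hχ]
  have hterm (x : ZMod p) : c x * (binaryQuadChar p (x + u) * binaryQuadChar p x) -
      c x * (χ (x + u) * χ x) =
      (if x = -u then c (-u) * χ (-u) else 0) + (if x = 0 then c 0 * χ u else 0) := by
    rw [hb, hb]
    by_cases h0 : x = 0
    · subst h0
      have h1 : ¬ (0 = -u) := fun h => hu (by simpa using h.symm)
      simp [hu, h1, hχ]
    · by_cases h1 : x = -u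
      · subst h1
        simp [hu, hχ]
      · have h2 : ¬ (x + u = 0) := fun h => h1 (eq_neg_of_add_eq_zero_left h)
        simp [h0, h1, h2]
  rw [← Finset.sum_sub_distrib, Finset.sum_congr rfl fun x _ => hterm x, Finset.sum_add_distrib]
  simp only [Finset.sum_ite_eq', Finset.mem_univ, if_true]
  refine (abs_add_le _ _).trans ?_
  rw [abs_mul, abs_mul]
  have h1 := mul_le_one₀ (hc (-u)) (abs_nonneg _) (hχ1 (-u))
  have h2 := mul_le_one₀ (hc 0) (abs_nonneg _) (hχ1 u)
  linarith

lemma abs_sq_sub_sq_le {x y η : ℝ} (hη : 0 < η) (h : |x - y| ≤ 2) :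
    |x ^ 2 - y ^ 2| ≤ y ^ 2 / η + 4 * η + 4 := by
  have h1 : |x + y| ≤ 2 * |y| + 2 := by
    have h2 : x + y = (x - y) + 2 * y := by ring
    rw [h2]
    refine (abs_add_le _ _).trans ?_
    rw [abs_mul, abs_two]
    linarith
  have h3 : 4 * |y| ≤ y ^ 2 / η + 4 * η := by
    have h4 : y ^ 2 / η + 4 * η - 4 * |y| = (|y| - 2 * η) ^ 2 / η := by
      rw [← sq_abs y]
      field_simp
      ring
    have : 0 ≤ (|y| - 2 * η) ^ 2 / η := by positivity
    linarith
  rw [sq_sub_sq, abs_mul]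
  have := mul_le_mul h1 h (abs_nonneg _) (by positivity)
  linarith

lemma abs_finsum_seqAutocorr_sq_sub_le (hp : p ≠ 2) (r : ℤ) :
    |∑ᶠ u ∈ {u : ℤ | u ≠ 0}, seqAutocorr (rotatedSeq r (binaryQuadChar p)) u ^ 2 -
      ((p : ℝ) ^ 2 / 3 + (2 * (((-2 * (r : ZMod p) : ZMod p).val : ℝ) + 1) - p) ^ 2) / 2| ≤
      100 * ((p : ℝ) ^ (7 / 4 : ℝ) * (1 + Real.log p) ^ 4) := by
  have hF : ringChar (ZMod p) ≠ 2 := by rwa [ZMod.ringChar_zmod_n]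
  have hp1 : (1 : ℝ) ≤ p := by exact_mod_cast (Fact.out : p.Prime).one_lt.le
  have hp0 : (0 : ℝ) < p := by linarith
  have hcard : (({0}ᶜ : Finset (ZMod p)).card : ℝ) ≤ p := by
    have := Finset.card_le_univ ({0}ᶜ : Finset (ZMod p))
    rw [ZMod.card] at this
    exact_mod_cast this
  set χ : ZMod p → ℝ := fun x => (quadraticChar (ZMod p) x : ℝ) with hχ
  have hX := abs_sum_negacyclicCorr_sub_le hp (r : ZMod p)
  set η : ℝ := (p : ℝ) ^ (1 / 2 : ℝ) with hη
  have hη0 : 0 < η := by positivity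
  have hη1 : 1 ≤ η := Real.one_le_rpow hp1 (by norm_num)
  have hper : ∑ u ∈ ({0}ᶜ : Finset (ZMod p)),
      (∑ x, binaryQuadChar p (x + u) * binaryQuadChar p x) ^ 2 ≤ 9 * p := by
    refine (Finset.sum_le_card_nsmul _ _ 9 fun u hu => ?_).trans ?_
    · have hu : u ≠ 0 := by simpa using hu
      have h1 := abs_weighted_corr_sub_le (fun _ => 1) (by simp) hu
      simp only [one_mul] at h1
      have h2 : ∑ x, (quadraticChar (ZMod p) (x + u) : ℝ) * quadraticChar (ZMod p) x = -1 := by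
        have h3 := sum_quadraticChar_mul hF u 0
        rw [if_neg hu] at h3
        have h4 : ∑ x, quadraticChar (ZMod p) (x + u) * quadraticChar (ZMod p) x = -1 := by
          rw [← zero_sub, ← h3]
          refine Fintype.sum_equiv (Equiv.neg _) _ _ fun x => ?_
          simp [add_comm]
        exact_mod_cast h4
      rw [h2, abs_le] at h1
      nlinarith
    · rw [nsmul_eq_mul]
      linarith
  have hper0 : 0 ≤ ∑ u ∈ ({0}ᶜ : Finset (ZMod p)),
      (∑ x, binaryQuadChar p (x + u) * binaryQuadChar p x) ^ 2 :=
    Finset.sum_nonneg fun _ _ => sq_nonneg _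
  have hneg : |∑ u ∈ ({0}ᶜ : Finset (ZMod p)),
        negacyclicCorr (r : ZMod p) (binaryQuadChar p) u ^ 2 -
      ∑ u ∈ ({0}ᶜ : Finset (ZMod p)), negacyclicCorr (r : ZMod p) χ u ^ 2| ≤
      (∑ u ∈ ({0}ᶜ : Finset (ZMod p)), negacyclicCorr (r : ZMod p) χ u ^ 2) / η +
        (4 * η + 4) * p := by
    rw [← Finset.sum_sub_distrib, Finset.sum_div]
    calc _ ≤ ∑ u ∈ ({0}ᶜ : Finset (ZMod p)),
          (negacyclicCorr (r : ZMod p) χ u ^ 2 / η + (4 * η + 4)) := by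
          refine (Finset.abs_sum_le_sum_abs _ _).trans (Finset.sum_le_sum fun u hu => ?_)
          have hu : u ≠ 0 := by simpa using hu
          rw [← add_assoc]
          exact abs_sq_sub_sq_le hη0
            (abs_weighted_corr_sub_le _ (fun x => (abs_wrapSign (x - (r : ZMod p)) u).le) hu)
      _ ≤ _ := by
          rw [Finset.sum_add_distrib, Finset.sum_const, nsmul_eq_mul, mul_comm (_ : ℝ) (4 * η + 4)]
          gcongr
  rw [finsum_seqAutocorr_sq_rotatedSeq]
  set P := ∑ u ∈ ({0}ᶜ : Finset (ZMod p)),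
      (∑ x, binaryQuadChar p (x + u) * binaryQuadChar p x) ^ 2
  set Y := ∑ u ∈ ({0}ᶜ : Finset (ZMod p)),
        negacyclicCorr (r : ZMod p) (binaryQuadChar p) u ^ 2
  set X := ∑ u ∈ ({0}ᶜ : Finset (ZMod p)), negacyclicCorr (r : ZMod p) χ u ^ 2
  have hQ : (2 * (((-2 * (r : ZMod p) : ZMod p).val : ℝ) + 1) - p) ^ 2 ≤ (p : ℝ) ^ 2 := by
    have h1 : ((-2 * (r : ZMod p) : ZMod p).val : ℝ) + 1 ≤ p := by
      exact_mod_cast (-2 * (r : ZMod p) : ZMod p).val_lt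
    have h2 : (0 : ℝ) ≤ ((-2 * (r : ZMod p) : ZMod p).val : ℝ) := by positivity
    exact sq_le_sq' (by linarith) (by linarith)
  set Q := (2 * (((-2 * (r : ZMod p) : ZMod p).val : ℝ) + 1) - p) ^ 2
  have hL1 : 1 ≤ (1 + Real.log p) ^ 4 :=
    one_le_pow₀ (by linarith [Real.log_nonneg hp1])
  set W := (p : ℝ) ^ (7 / 4 : ℝ) * (1 + Real.log p) ^ 4 with hW
  have hWge : (p : ℝ) ^ (7 / 4 : ℝ) ≤ W := le_mul_of_one_le_right (by positivity) hL1
  have hpW : (p : ℝ) ≤ W := by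
    refine le_trans ?_ hWge
    exact Real.self_le_rpow_of_one_le hp1 (by norm_num)
  have hηp : η * p = (p : ℝ) ^ (3 / 2 : ℝ) := by
    rw [hη, ← Real.rpow_add_one hp0.ne']
    norm_num
  have hηpW : η * p ≤ W := by
    refine le_trans ?_ hWge
    rw [hηp]
    exact Real.rpow_le_rpow_of_exponent_le hp1 (by norm_num)
  have hηsq : η * η = p := by
    rw [hη, ← Real.rpow_add hp0]
    norm_num
  have hXle : X ≤ 2 * (p : ℝ) ^ 2 + 83 * W := by
    have := (abs_le.mp hX).2
    nlinarith
  have hXη : X / η ≤ 2 * W + 83 * W := by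
    rw [div_le_iff₀ hη0]
    have h1 : (p : ℝ) ^ 2 = (η * p) * η := by rw [← hηsq]; ring
    have h2 : (p : ℝ) ^ 2 ≤ W * η := by rw [h1]; gcongr
    have h3 : W ≤ W * η := le_mul_of_one_le_right (by linarith) hη1
    linarith
  rw [mul_assoc, ← hW] at hX
  rw [abs_le] at hX hneg ⊢
  constructor <;> linarith

end MeritFactor

section Asymptotics

open Filter Topology

lemma tendsto_rpow_mul_log_pow_div_sq :
    Tendsto (fun p : ℕ => 100 * ((p : ℝ) ^ (7 / 4 : ℝ) * (1 + Real.log p) ^ 4) / (p : ℝ) ^ 2)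
      atTop (𝓝 0) := by
  have hlog : Tendsto (fun x : ℝ => (1 + Real.log x) / x ^ (1 / 16 : ℝ)) atTop (𝓝 0) := by
    have h1 : Tendsto (fun x : ℝ => x ^ (-(1 / 16) : ℝ)) atTop (𝓝 0) :=
      tendsto_rpow_neg_atTop (by norm_num)
    have h2 := (isLittleO_log_rpow_atTop (r := 1 / 16) (by norm_num)).tendsto_div_nhds_zero
    have h3 := h1.add h2
    rw [add_zero] at h3
    refine h3.congr' ?_
    filter_upwards [eventually_gt_atTop 0] with x hx
    rw [Real.rpow_neg hx.le, add_div, one_div (x ^ (1 / 16 : ℝ))]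
  have h := ((hlog.comp tendsto_natCast_atTop_atTop).pow 4).const_mul 100
  rw [zero_pow four_ne_zero, mul_zero] at h
  refine h.congr' ?_
  filter_upwards [eventually_gt_atTop 0] with p hp
  have hp0 : (0 : ℝ) < p := by exact_mod_cast hp
  have e1 : ((p : ℝ) ^ (1 / 16 : ℝ)) ^ 4 = (p : ℝ) ^ (1 / 4 : ℝ) := by
    rw [← Real.rpow_natCast, ← Real.rpow_mul hp0.le]
    norm_num
  have e2 : (p : ℝ) ^ 2 = (p : ℝ) ^ (7 / 4 : ℝ) * (p : ℝ) ^ (1 / 4 : ℝ) := by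
    rw [← Real.rpow_add hp0]
    norm_num
  simp only [Function.comp_apply, div_pow, e1, e2]
  field_simp

lemma exists_rotation_limit {s : ℝ} (hs1 : -(1 / 2) < s) (hs2 : s ≤ 1 / 2) :
    ∃ c : ℝ, c ^ 2 = (1 - 4 * |s|) ^ 2 ∧ ∀ᶠ p : ℕ in atTop, p.Prime → Odd p →
      |(2 * (((-2 * (⌊(p : ℝ) * s⌋ : ZMod p) : ZMod p).val : ℝ) + 1) - p) / p - c| ≤ 6 / p := by
  have hval (p : ℕ) [NeZero p] (r : ℤ) :
      (((-2 * (r : ZMod p) : ZMod p).val : ℤ) : ℝ) = ((-2 * r % p : ℤ) : ℝ) := by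
    rw [← ZMod.val_intCast]
    push_cast
    rfl
  have hdiv {p : ℕ} (hp : 0 < p) {x c : ℝ} (h : |x - c * p| ≤ 6) : |x / p - c| ≤ 6 / p := by
    have hp0 : (0 : ℝ) < p := by exact_mod_cast hp
    have : x / p - c = (x - c * p) / p := by field_simp
    rw [this, abs_div, abs_of_pos hp0]
    gcongr
  rcases lt_or_ge 0 s with hs | hs
  · refine ⟨1 - 4 * s, by rw [abs_of_pos hs], ?_⟩
    filter_upwards [eventually_ge_atTop ⌈1 / s⌉₊] with p hp hprime hodd
    have : NeZero p := ⟨hprime.ne_zero⟩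
    have hp0 : (0 : ℝ) < p := by exact_mod_cast hprime.pos
    refine hdiv hprime.pos ?_
    have h1 : 1 ≤ (p : ℝ) * s := (div_le_iff₀ hs).mp (Nat.ceil_le.mp hp)
    have hr1 : (1 : ℤ) ≤ ⌊(p : ℝ) * s⌋ := Int.le_floor.mpr (by exact_mod_cast h1)
    have hfl := Int.floor_le ((p : ℝ) * s)
    have hlt := Int.lt_floor_add_one ((p : ℝ) * s)
    have hr2 : 2 * ⌊(p : ℝ) * s⌋ ≤ p := by
      have : 2 * (⌊(p : ℝ) * s⌋ : ℝ) ≤ p := by nlinarith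
      exact_mod_cast this
    have hv := hval p ⌊(p : ℝ) * s⌋
    have hmod : -2 * ⌊(p : ℝ) * s⌋ % (p : ℤ) = p - 2 * ⌊(p : ℝ) * s⌋ := by
      obtain ⟨k, hk⟩ := hodd
      rw [← Int.add_emod_right, Int.emod_eq_of_lt (by omega) (by omega)]
      ring
    rw [hmod] at hv
    push_cast at hv
    rw [hv, abs_le]
    constructor <;> nlinarith
  · refine ⟨-(1 + 4 * s), by rw [abs_of_nonpos hs]; ring, ?_⟩
    filter_upwards [eventually_ge_atTop ⌈2 / (1 + 2 * s)⌉₊] with p hp hprime hodd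
    have : NeZero p := ⟨hprime.ne_zero⟩
    have hp0 : (0 : ℝ) < p := by exact_mod_cast hprime.pos
    refine hdiv hprime.pos ?_
    have h1 : 2 ≤ (p : ℝ) * (1 + 2 * s) := (div_le_iff₀ (by linarith)).mp (Nat.ceil_le.mp hp)
    have hfl := Int.floor_le ((p : ℝ) * s)
    have hlt := Int.lt_floor_add_one ((p : ℝ) * s)
    have hr1 : ⌊(p : ℝ) * s⌋ ≤ 0 := by
      have : (⌊(p : ℝ) * s⌋ : ℝ) ≤ 0 := by nlinarith
      exact_mod_cast this
    have hr2 : -2 * ⌊(p : ℝ) * s⌋ < p := by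
      have : -2 * (⌊(p : ℝ) * s⌋ : ℝ) < p := by nlinarith
      exact_mod_cast this
    have hv := hval p ⌊(p : ℝ) * s⌋
    rw [Int.emod_eq_of_lt (by omega) hr2] at hv
    push_cast at hv
    rw [hv, abs_le]
    constructor <;> nlinarith

end Asymptotics

/-- (Høholdt–Jensen) As `p → ∞` through the odd primes, `1/F(L_s)` converges to
`1/6 + 8(|s| - 1/4)²`, where `L` is the Legendre sequence of length `p`. -/
theorem stmt4 (s : ℝ) (hs1 : -(1/2) < s) (hs2 : s ≤ 1/2) :
    Filter.Tendsto
      (fun p : ℕ => 1 / seqMeritFactor p (seqRotate p s (legendreSeq p)))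
      (Filter.atTop ⊓ Filter.principal {p : ℕ | p.Prime ∧ Odd p})
      (nhds (1/6 + 8 * (|s| - 1/4) ^ 2)) := by
  obtain ⟨c, hc, hev⟩ := exists_rotation_limit hs1 hs2
  set l := Filter.atTop ⊓ Filter.principal {p : ℕ | p.Prime ∧ Odd p}
  have hl : l ≤ Filter.atTop := inf_le_left
  have hmem : ∀ᶠ p : ℕ in l, p.Prime ∧ Odd p :=
    Filter.mem_inf_of_right (Filter.mem_principal_self _)
  set y : ℕ → ℝ := fun p =>
    (2 * (((-2 * (⌊(p : ℝ) * s⌋ : ZMod p) : ZMod p).val : ℝ) + 1) - p) / p with hy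
  have hylim : Filter.Tendsto y l (nhds c) := by
    rw [tendsto_iff_norm_sub_tendsto_zero]
    refine squeeze_zero' (Filter.Eventually.of_forall fun _ => norm_nonneg _) ?_
      ((tendsto_const_div_atTop_nhds_zero_nat 6).mono_left hl)
    filter_upwards [hmem, hl hev] with p hp h
    exact h hp.1 hp.2
  have hmain : Filter.Tendsto (fun p : ℕ => (1 / 3 + y p ^ 2) / 2) l
      (nhds (1/6 + 8 * (|s| - 1/4) ^ 2)) := by
    have h := ((hylim.pow 2).const_add (1 / 3)).div_const 2
    have e : (1 / 3 + c ^ 2) / 2 = 1/6 + 8 * (|s| - 1/4) ^ 2 := by rw [hc]; ring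
    rwa [e] at h
  have hdiff : Filter.Tendsto (fun p : ℕ => 1 / seqMeritFactor p (seqRotate p s (legendreSeq p)) -
      (1 / 3 + y p ^ 2) / 2) l (nhds 0) := by
    refine squeeze_zero_norm' ?_ (tendsto_rpow_mul_log_pow_div_sq.mono_left hl)
    filter_upwards [hmem] with p hp
    have : Fact p.Prime := ⟨hp.1⟩
    have hp0 : (0 : ℝ) < p := by exact_mod_cast hp.1.pos
    have hp2 : p ≠ 2 := by
      rintro rfl
      exact absurd hp.2 (by decide)
    have h := abs_finsum_seqAutocorr_sq_sub_le hp2 ⌊(p : ℝ) * s⌋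
    rw [seqMeritFactor, one_div_div, seqRotate_legendreSeq, Int.cast_natCast, Real.norm_eq_abs]
    rw [le_div_iff₀ (by positivity)]
    refine le_of_eq_of_le ?_ h
    rw [← abs_of_pos (show (0 : ℝ) < (p : ℝ) ^ 2 by positivity), ← abs_mul,
      abs_of_pos (show (0 : ℝ) < (p : ℝ) ^ 2 by positivity), sub_mul, hy]
    congr 2
    · field_simp
    · field_simp
  have hsum := hdiff.add hmain
  simpa using hsum
end
end

section
/- Let s be a real number with -1/2 < s ≤ 1/2. There exists a constant c > 0 (depending only on s) such that for every prime p > 2, letting L be the ternary Legendre sequence of length p, | (1/p²) ∑_u C_{L_s}(u)² - (7/6 + 8(|s| - 1/4)²) | ≤ c · p^{-1} (log p)². -/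
open scoped BigOperators

noncomputable section

section QuadraticCharacter

open ZMod Finset ComplexConjugate

variable {p : ℕ} [Fact p.Prime]

/-- The quadratic character modulo `p` with complex values. -/
def complexQuadraticChar (p : ℕ) [Fact p.Prime] : MulChar (ZMod p) ℂ :=
  (quadraticChar (ZMod p)).ringHomComp (Int.castRingHom ℂ)

local notation "χ" => complexQuadraticChar p
local notation "ψ" => (stdAddChar : AddChar (ZMod p) ℂ)

lemma complexQuadraticChar_apply (a : ZMod p) : χ a = (quadraticChar (ZMod p) a : ℂ) := rfl

lemma complexQuadraticChar_zero : χ 0 = 0 := by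
  simp [complexQuadraticChar_apply]

lemma complexQuadraticChar_sq (a : ZMod p) : χ a * χ a = if a = 0 then 0 else 1 := by
  split_ifs with h
  · simp [h, complexQuadraticChar_zero]
  · rw [complexQuadraticChar_apply, ← sq]
    exact_mod_cast quadraticChar_sq_one h

lemma conj_complexQuadraticChar (a : ZMod p) : conj (χ a) = χ a := by
  simp [complexQuadraticChar_apply]

lemma norm_complexQuadraticChar_le (a : ZMod p) : ‖χ a‖ ≤ 1 := by
  rcases eq_or_ne a 0 with rfl | h
  · simp [complexQuadraticChar_zero]
  · rcases quadraticChar_dichotomy h with h | h <;> simp [complexQuadraticChar_apply, h]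

lemma conj_stdAddChar (a : ZMod p) : conj (ψ a) = ψ (-a) :=
  (AddChar.map_neg_eq_conj _ _).symm

lemma sum_stdAddChar_mul (b : ZMod p) : ∑ x : ZMod p, ψ (x * b) = if b = 0 then (p : ℂ) else 0 := by
  rw [AddChar.sum_mulShift _ (isPrimitive_stdAddChar p), ZMod.card]
  split_ifs <;> simp

lemma stdAddChar_sub_one_ne_zero {d : ZMod p} (hd : d ≠ 0) : ψ d - 1 ≠ 0 := by
  intro h
  apply hd
  apply injective_stdAddChar
  simpa [sub_eq_zero] using h

lemma complexQuadraticChar_ne_one (hp : p ≠ 2) : χ ≠ 1 := by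
  intro h
  obtain ⟨a, ha⟩ := quadraticChar_exists_neg_one' (F := ZMod p) (by rwa [ZMod.ringChar_zmod_n])
  have h1 : χ a = 1 := by rw [h, MulChar.one_apply_coe]
  rw [complexQuadraticChar_apply, ha] at h1
  norm_num at h1

lemma complexQuadraticChar_inv : (χ)⁻¹ = χ :=
  ((quadraticChar_isQuadratic (ZMod p)).comp _).inv

lemma sum_complexQuadraticChar_mul_addChar (hp : p ≠ 2) (φ : AddChar (ZMod p) ℂ) (t : ZMod p) :
    ∑ a, χ a * φ (a * t) = χ t * gaussSum χ φ := by
  rcases eq_or_ne t 0 with rfl | ht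
  · simpa [complexQuadraticChar_zero] using
      MulChar.sum_eq_zero_of_ne_one (complexQuadraticChar_ne_one hp)
  · have h := gaussSum_mulShift_eq χ φ (Units.mk0 t ht)
    rw [complexQuadraticChar_inv] at h
    simpa [gaussSum, AddChar.mulShift_apply, mul_comm] using h

lemma card_mul_complexQuadraticChar_mul (hp : p ≠ 2) (i j : ZMod p) :
    (p : ℂ) * (χ i * χ j) = ∑ a, ∑ b, χ a * χ b * ψ (a * i - b * j) := by
  have h : gaussSum χ ψ * gaussSum χ ψ⁻¹ = p := by
    have hχ : χ ≠ 1 := complexQuadraticChar_ne_one hp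
    have := gaussSum_mul_gaussSum_eq_card hχ (isPrimitive_stdAddChar p)
    rwa [complexQuadraticChar_inv, ZMod.card] at this
  calc (p : ℂ) * (χ i * χ j) = (χ i * gaussSum χ ψ) * (χ j * gaussSum χ ψ⁻¹) := by
        rw [← h]; ring
    _ = _ := by
        rw [← sum_complexQuadraticChar_mul_addChar hp, ← sum_complexQuadraticChar_mul_addChar hp,
          sum_mul_sum]
        refine sum_congr rfl fun a _ => sum_congr rfl fun b _ => ?_
        rw [AddChar.inv_apply, sub_eq_add_neg, AddChar.map_add_eq_mul]
        ring

lemma sum_complexQuadraticChar_sq_mul_stdAddChar (t : ZMod p) :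
    ∑ a, χ a * χ a * ψ (a * t) = (if t = 0 then (p : ℂ) else 0) - 1 := by
  rw [← sum_stdAddChar_mul, ← sum_erase_add _ _ (mem_univ (0 : ZMod p)),
    ← sum_erase_add _ _ (mem_univ (0 : ZMod p))]
  simp only [complexQuadraticChar_zero, zero_mul, add_zero, AddChar.map_zero_eq_one,
    add_sub_cancel_right]
  refine sum_congr rfl fun a ha => ?_
  rw [complexQuadraticChar_sq, if_neg (ne_of_mem_erase ha), one_mul]

lemma sum_complexQuadraticChar_shift_mul_shift (hp : p ≠ 2) (d e : ZMod p) :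
    ∑ a, χ (a + d) * χ (a + e) = (if d = e then (p : ℂ) else 0) - 1 := by
  have hp0 : (p : ℂ) ≠ 0 := by exact_mod_cast (Fact.out : p.Prime).ne_zero
  apply mul_left_cancel₀ hp0
  rw [mul_sum]
  simp_rw [card_mul_complexQuadraticChar_mul hp]
  rw [sum_comm]
  simp_rw [sum_comm (s := (univ : Finset (ZMod p))) (t := univ) (f := fun x y => χ _ * χ y * _)]
  have key (a b : ZMod p) : ∑ x, χ a * χ b * ψ (a * (x + d) - b * (x + e)) =
      if b = a then (p : ℂ) * (χ a * χ a * ψ (a * (d - e))) else 0 := by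
    have : ∀ x, χ a * χ b * ψ (a * (x + d) - b * (x + e)) =
        χ a * χ b * ψ (a * d - b * e) * ψ (x * (a - b)) := fun x => by
      rw [mul_assoc, mul_assoc, mul_assoc, ← AddChar.map_add_eq_mul]
      ring_nf
    simp_rw [this, ← mul_sum, sum_stdAddChar_mul, sub_eq_zero, eq_comm (a := b)]
    split_ifs with h
    · subst h
      ring_nf
    · simp
  simp_rw [key]
  simp only [sum_ite_eq', mem_univ, if_true, ← mul_sum, sum_complexQuadraticChar_sq_mul_stdAddChar,
    sub_eq_zero]

/-- Half of the kernel produced by summing additive characters over an interval;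
its value at `0` is `0`. -/
def intervalKernel (r d : ZMod p) : ℂ := stdAddChar (d * r) / (stdAddChar d - 1)

/-- The antisymmetric interval kernel. -/
def oddKernel (r d : ZMod p) : ℂ := intervalKernel r (-d) - intervalKernel r d

/-- Fourier coefficients of the aperiodic autocorrelation of the quadratic character. -/
def corrCoeff (r a : ZMod p) : ℂ :=
  complexQuadraticChar p a * ∑ d, complexQuadraticChar p (a + d) * oddKernel r d

/-- Aperiodic autocorrelation of the quadratic character on an interval of length `p` which
starts at `r`. -/
def windowCorr (r : ZMod p) (u : ℕ) : ℝ :=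
  ∑ i ∈ range (p - u),
    ((quadraticChar (ZMod p) (i + r) * quadraticChar (ZMod p) (i + u + r) : ℤ) : ℝ)

lemma sum_range_stdAddChar (r a b : ZMod p) {u : ℕ} (hu : u ≤ p) :
    ∑ i ∈ range (p - u), ψ (a * (i + r) - b * (i + u + r)) =
      (if b = a then ((p : ℂ) - u) * ψ (a * -u) else 0) +
        (ψ (a * -u) - ψ (b * -u)) * intervalKernel r (a - b) := by
  have h (i : ℕ) : ψ (a * (i + r) - b * (i + u + r)) =
      ψ ((a - b) * r) * ψ (b * -u) * ψ (a - b) ^ i := by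
    rw [← AddChar.map_nsmul_eq_pow, ← AddChar.map_add_eq_mul, ← AddChar.map_add_eq_mul,
      nsmul_eq_mul]
    ring_nf
  simp_rw [h, ← mul_sum]
  split_ifs with hab
  · subst hab
    simp [Nat.cast_sub hu]
    ring
  · have h1 : ψ (a - b) - 1 ≠ 0 := stdAddChar_sub_one_ne_zero (sub_ne_zero.2 (Ne.symm hab))
    have h2 : ψ (a - b) ^ (p - u) * ψ (b * -u) = ψ (a * -u) := by
      rw [← AddChar.map_nsmul_eq_pow, ← AddChar.map_add_eq_mul, nsmul_eq_mul, Nat.cast_sub hu]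
      simp
      ring_nf
    rw [geom_sum_eq (by simpa [sub_eq_zero] using h1), intervalKernel, ← h2]
    field_simp
    ring

lemma windowCorr_fourier (hp : p ≠ 2) (r : ZMod p) {u : ℕ} (hu0 : 0 < u) (hu : u < p) :
    (p : ℂ) * windowCorr r u + (p - u) = ∑ a, ψ (a * -u) * corrCoeff r a := by
  have hu' : (-(u : ZMod p)) ≠ 0 := by
    rw [neg_ne_zero, Ne, ZMod.natCast_eq_zero_iff]
    exact Nat.not_dvd_of_pos_of_lt hu0 hu
  have h1 : (p : ℂ) * windowCorr r u =
      ∑ a, ∑ b, χ a * χ b * ((if b = a then ((p : ℂ) - u) * ψ (a * -u) else 0) +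
        (ψ (a * -u) - ψ (b * -u)) * intervalKernel r (a - b)) := by
    simp_rw [← sum_range_stdAddChar r _ _ hu.le]
    rw [windowCorr]
    push_cast
    rw [mul_sum]
    simp_rw [← complexQuadraticChar_apply, card_mul_complexQuadraticChar_mul hp]
    rw [sum_comm]
    refine sum_congr rfl fun a _ => ?_
    rw [sum_comm]
    refine sum_congr rfl fun b _ => ?_
    rw [mul_sum]
  rw [h1]
  simp_rw [mul_add, sum_add_distrib]
  have h2 : ∑ a, ∑ b, χ a * χ b * (if b = a then ((p : ℂ) - u) * ψ (a * -u) else 0) = -(p - u) := by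
    simp only [mul_ite, mul_zero, sum_ite_eq', mem_univ, if_true]
    have := sum_complexQuadraticChar_sq_mul_stdAddChar (p := p) (-(u : ZMod p))
    rw [if_neg hu'] at this
    calc _ = (p - u) * ∑ a, χ a * χ a * ψ (a * -u) := by
          rw [mul_sum]; exact sum_congr rfl fun _ _ => by ring
      _ = _ := by rw [this]; ring
  rw [h2, neg_add_cancel_comm]
  have h3 : ∀ a, ψ (a * -u) * corrCoeff r a =
      ∑ b, χ a * χ b * (ψ (a * -u) * intervalKernel r (a - b)) -
        ∑ b, χ b * χ a * (ψ (a * -u) * intervalKernel r (b - a)) := fun a => by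
    rw [corrCoeff, ← (Equiv.subRight a).sum_comp, ← sum_sub_distrib, mul_sum, mul_sum]
    refine sum_congr rfl fun b _ => ?_
    simp [oddKernel]
    ring
  simp_rw [h3, sum_sub_distrib, sub_mul, mul_sub, sum_sub_distrib]
  congr 1
  rw [sum_comm]

lemma oddKernel_neg (r d : ZMod p) : oddKernel r (-d) = -oddKernel r d := by
  simp [oddKernel]

lemma sum_oddKernel (r : ZMod p) : ∑ d, oddKernel r d = 0 := by
  have h : ∑ d, intervalKernel r (-d) = ∑ d, intervalKernel r d :=
    Equiv.sum_comp (Equiv.neg (ZMod p)) (intervalKernel r)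
  simp only [oddKernel, sum_sub_distrib, h, sub_self]

lemma corrCoeff_zero (r : ZMod p) : corrCoeff r 0 = 0 := by
  simp [corrCoeff, complexQuadraticChar_zero]

lemma sum_corrCoeff (r : ZMod p) : ∑ a, corrCoeff r a = 0 := by
  have h (a : ZMod p) : corrCoeff r a = ∑ b, χ a * χ b * oddKernel r (b - a) := by
    rw [corrCoeff, ← (Equiv.subRight a).sum_comp, mul_sum]
    refine sum_congr rfl fun b _ => ?_
    simp
    ring
  have h2 : ∑ a, corrCoeff r a = -∑ a, corrCoeff r a := by
    simp_rw [h]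
    conv_rhs => rw [sum_comm]
    rw [← sum_neg_distrib]
    refine sum_congr rfl fun a _ => ?_
    rw [← sum_neg_distrib]
    refine sum_congr rfl fun b _ => ?_
    rw [← neg_sub a b, oddKernel_neg]
    ring
  linear_combination h2 / 2

lemma sum_zmod_eq_sum_range (f : ZMod p → ℂ) : ∑ u, f u = ∑ u ∈ range p, f u := by
  refine (sum_bij (fun (u : ℕ) _ => (u : ZMod p)) (by simp) ?_ ?_ (by simp)).symm
  · intro a ha b hb h
    rw [mem_range] at ha hb
    have := congrArg ZMod.val h
    rwa [ZMod.val_cast_of_lt ha, ZMod.val_cast_of_lt hb] at this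
  · intro b _
    exact ⟨b.val, mem_range.2 b.val_lt, by simp⟩

lemma sum_zmod_eq_sum_Ico {f : ZMod p → ℂ} (h0 : f 0 = 0) : ∑ u, f u = ∑ u ∈ Ico 1 p, f u := by
  rw [sum_zmod_eq_sum_range, range_eq_Ico, sum_eq_sum_Ico_succ_bot (Fact.out : p.Prime).pos]
  simp [h0]

lemma sum_fourier_mul_conj (c : ZMod p → ℂ) :
    ∑ u, (∑ a, ψ (a * -u) * c a) * conj (∑ a, ψ (a * -u) * c a) = p * ∑ a, c a * conj (c a) := by
  have h (u : ZMod p) : (∑ a, ψ (a * -u) * c a) * conj (∑ a, ψ (a * -u) * c a) =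
      ∑ a, ∑ b, c a * conj (c b) * ψ (u * (b - a)) := by
    rw [map_sum, sum_mul_sum]
    refine sum_congr rfl fun a _ => sum_congr rfl fun b _ => ?_
    rw [map_mul (starRingEnd ℂ), conj_stdAddChar, show u * (b - a) = a * -u + -(b * -u) by ring,
      AddChar.map_add_eq_mul]
    ring
  simp_rw [h]
  rw [sum_comm, mul_sum]
  refine sum_congr rfl fun a _ => ?_
  rw [sum_comm]
  simp_rw [← mul_sum, sum_stdAddChar_mul, sub_eq_zero]
  simp [mul_comm]

lemma sum_corrCoeff_mul_conj (hp : p ≠ 2) (r : ZMod p) :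
    ∑ a, corrCoeff r a * conj (corrCoeff r a) =
      p * ∑ d, oddKernel r d * conj (oddKernel r d) -
        (∑ d, χ d * oddKernel r d) * conj (∑ d, χ d * oddKernel r d) := by
  set E : ZMod p → ℂ := fun a => ∑ d, χ (a + d) * oddKernel r d with hE
  have hE0 : E 0 = ∑ d, χ d * oddKernel r d := by simp [hE]
  have h1 : ∑ a, corrCoeff r a * conj (corrCoeff r a) =
      ∑ a, E a * conj (E a) - E 0 * conj (E 0) := by
    rw [← sum_erase_add (a := (0 : ZMod p)) _ _ (mem_univ _),
      ← sum_erase_add (a := (0 : ZMod p)) univ (fun a => E a * conj (E a)) (mem_univ _)]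
    rw [corrCoeff_zero, zero_mul, add_zero, add_sub_cancel_right]
    refine sum_congr rfl fun a ha => ?_
    have := complexQuadraticChar_sq a
    rw [if_neg (ne_of_mem_erase ha)] at this
    change (χ a * E a) * conj (χ a * E a) = _
    rw [map_mul, conj_complexQuadraticChar]
    linear_combination E a * conj (E a) * this
  have h2 : ∑ a, E a * conj (E a) = p * ∑ d, oddKernel r d * conj (oddKernel r d) := by
    have h (a : ZMod p) : E a * conj (E a) =
        ∑ d, ∑ e, oddKernel r d * conj (oddKernel r e) * (χ (a + d) * χ (a + e)) := by
      rw [hE, map_sum, sum_mul_sum]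
      refine sum_congr rfl fun d _ => sum_congr rfl fun e _ => ?_
      rw [map_mul, conj_complexQuadraticChar]
      ring
    simp_rw [h]
    rw [sum_comm, mul_sum]
    have h3 (d : ZMod p) :
        ∑ a, ∑ e, oddKernel r d * conj (oddKernel r e) * (χ (a + d) * χ (a + e)) =
          p * (oddKernel r d * conj (oddKernel r d)) := by
      rw [sum_comm]
      simp_rw [← mul_sum, sum_complexQuadraticChar_shift_mul_shift hp, mul_sub, sum_sub_distrib,
        mul_one, ← mul_sum, ← map_sum, sum_oddKernel]
      simp [mul_comm]
    exact sum_congr rfl fun d _ => h3 d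
  rw [h1, h2, hE0]

lemma sub_one_mul_sum_range_mul_pow (w : ℂ) (n : ℕ) :
    (w - 1) * ∑ u ∈ range n, u * w ^ u = n * w ^ n - w * ∑ u ∈ range n, w ^ u := by
  induction n with
  | zero => simp
  | succ n ih =>
    rw [sum_range_succ, mul_add, ih, sum_range_succ]
    push_cast
    ring

lemma sum_range_mul_stdAddChar {a : ZMod p} (ha : a ≠ 0) :
    ∑ u ∈ range p, (u : ℂ) * ψ (a * u) = p / (ψ a - 1) := by
  have h1 := stdAddChar_sub_one_ne_zero ha
  have hw : ψ a ^ p = 1 := by rw [← AddChar.map_nsmul_eq_pow]; simp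
  have h2 (u : ℕ) : ψ (a * u) = ψ a ^ u := by
    rw [← AddChar.map_nsmul_eq_pow, nsmul_eq_mul, mul_comm]
  rw [eq_div_iff h1, mul_comm]
  simp_rw [h2]
  rw [sub_one_mul_sum_range_mul_pow, geom_sum_eq (by simpa [sub_eq_zero] using h1), hw]
  simp

lemma norm_stdAddChar (a : ZMod p) : ‖ψ a‖ = 1 := by
  rw [stdAddChar_apply]
  exact Circle.norm_coe _

lemma norm_intervalKernel (r d : ZMod p) : ‖intervalKernel r d‖ = ‖ψ d - 1‖⁻¹ := by
  rw [intervalKernel, norm_div, norm_stdAddChar, one_div]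

lemma sum_norm_oddKernel_le (r : ZMod p) :
    ∑ d, ‖oddKernel r d‖ ≤ 2 * ∑ d : ZMod p, ‖ψ d - 1‖⁻¹ := by
  have h : ∑ d : ZMod p, ‖ψ (-d) - 1‖⁻¹ = ∑ d : ZMod p, ‖ψ d - 1‖⁻¹ :=
    Equiv.sum_comp (Equiv.neg (ZMod p)) fun d => ‖ψ d - 1‖⁻¹
  rw [two_mul]
  nth_rewrite 1 [← h]
  rw [← sum_add_distrib]
  refine sum_le_sum fun d _ => ?_
  rw [← norm_intervalKernel r, ← norm_intervalKernel r]
  exact norm_sub_le _ _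

lemma norm_sum_complexQuadraticChar_mul_oddKernel_le (r a : ZMod p) :
    ‖∑ d, χ (a + d) * oddKernel r d‖ ≤ 2 * ∑ d : ZMod p, ‖ψ d - 1‖⁻¹ := by
  refine (norm_sum_le _ _).trans ((sum_le_sum fun d _ => ?_).trans (sum_norm_oddKernel_le r))
  rw [norm_mul]
  exact mul_le_of_le_one_left (norm_nonneg _) (norm_complexQuadraticChar_le _)

lemma norm_corrCoeff_le (r a : ZMod p) : ‖corrCoeff r a‖ ≤ 2 * ∑ d : ZMod p, ‖ψ d - 1‖⁻¹ := by
  rw [corrCoeff, norm_mul]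
  exact (mul_le_of_le_one_left (norm_nonneg _) (norm_complexQuadraticChar_le _)).trans
    (norm_sum_complexQuadraticChar_mul_oddKernel_le r a)

/-- `p` times the aperiodic autocorrelation, recentred to have Fourier coefficients
`corrCoeff`. -/
def centredCorr (r : ZMod p) (u : ℕ) : ℝ := p * windowCorr r u + (p - u)

lemma centredCorr_fourier (hp : p ≠ 2) (r : ZMod p) {u : ℕ} (hu : u ∈ Ico 1 p) :
    (centredCorr r u : ℂ) = ∑ a, ψ (a * -u) * corrCoeff r a := by
  rw [mem_Ico] at hu
  rw [← windowCorr_fourier hp r hu.1 hu.2, centredCorr]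
  push_cast
  rfl

lemma fourier_corrCoeff_zero (r : ZMod p) : ∑ a, ψ (a * -0) * corrCoeff r a = 0 := by
  simpa using sum_corrCoeff r

lemma sum_centredCorr (hp : p ≠ 2) (r : ZMod p) : ∑ u ∈ Ico 1 p, centredCorr r u = 0 := by
  have h : ((∑ u ∈ Ico 1 p, centredCorr r u : ℝ) : ℂ) = 0 := by
    push_cast
    rw [sum_congr rfl fun u hu => centredCorr_fourier hp r hu,
      ← sum_zmod_eq_sum_Ico (f := fun u : ZMod p => ∑ a, ψ (a * -u) * corrCoeff r a)
        (fourier_corrCoeff_zero r), sum_comm]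
    refine sum_eq_zero fun a _ => ?_
    rw [← sum_mul]
    have h1 (u : ZMod p) : ψ (a * -u) = ψ (u * -a) := by ring_nf
    simp_rw [h1, sum_stdAddChar_mul, neg_eq_zero]
    split_ifs with h
    · rw [h, corrCoeff_zero, mul_zero]
    · rw [zero_mul]
  exact_mod_cast h

lemma sum_centredCorr_sq (hp : p ≠ 2) (r : ZMod p) :
    ∑ u ∈ Ico 1 p, centredCorr r u ^ 2 =
      p * (p * ∑ d, ‖oddKernel r d‖ ^ 2 - ‖∑ d, χ d * oddKernel r d‖ ^ 2) := by
  have h : ((∑ u ∈ Ico 1 p, centredCorr r u ^ 2 : ℝ) : ℂ) =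
      p * (p * ∑ d, oddKernel r d * conj (oddKernel r d) -
        (∑ d, χ d * oddKernel r d) * conj (∑ d, χ d * oddKernel r d)) := by
    rw [← sum_corrCoeff_mul_conj hp, ← sum_fourier_mul_conj,
      sum_zmod_eq_sum_Ico (by rw [fourier_corrCoeff_zero, zero_mul])]
    push_cast
    refine sum_congr rfl fun u hu => ?_
    rw [← centredCorr_fourier hp r hu, Complex.conj_ofReal, sq]
  simp_rw [Complex.mul_conj'] at h
  exact_mod_cast h

lemma abs_sum_mul_centredCorr_le (hp : p ≠ 2) (r : ZMod p) :
    |∑ u ∈ Ico 1 p, u * centredCorr r u| ≤ 2 * p * (∑ d : ZMod p, ‖ψ d - 1‖⁻¹) ^ 2 := by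
  have h : ((∑ u ∈ Ico 1 p, u * centredCorr r u : ℝ) : ℂ) =
      ∑ a, corrCoeff r a * ∑ u ∈ range p, (u : ℂ) * ψ (-a * u) := by
    push_cast
    simp_rw [mul_sum]
    rw [sum_comm, range_eq_Ico, sum_eq_sum_Ico_succ_bot (Fact.out : p.Prime).pos]
    simp only [Nat.cast_zero, zero_mul, mul_zero, sum_const_zero, zero_add]
    refine sum_congr rfl fun u hu => ?_
    rw [centredCorr_fourier hp r hu, mul_sum]
    refine sum_congr rfl fun a _ => ?_
    rw [neg_mul, mul_neg]
    ring
  rw [← Real.norm_eq_abs, ← Complex.norm_real, h]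
  have hneg : ∑ d : ZMod p, ‖ψ (-d) - 1‖⁻¹ = ∑ d : ZMod p, ‖ψ d - 1‖⁻¹ :=
    Equiv.sum_comp (Equiv.neg (ZMod p)) fun d => ‖ψ d - 1‖⁻¹
  calc _ ≤ ∑ a, ‖corrCoeff r a * ∑ u ∈ range p, (u : ℂ) * ψ (-a * u)‖ := norm_sum_le _ _
    _ ≤ ∑ a, (2 * ∑ d : ZMod p, ‖ψ d - 1‖⁻¹) * (p * ‖ψ (-a) - 1‖⁻¹) := by
      refine sum_le_sum fun a _ => ?_
      rcases eq_or_ne a 0 with rfl | ha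
      · simp [corrCoeff_zero]
      · rw [norm_mul, sum_range_mul_stdAddChar (neg_ne_zero.2 ha), norm_div, div_eq_mul_inv,
          Complex.norm_natCast]
        gcongr
        exact norm_corrCoeff_le r a
    _ = _ := by
      rw [← mul_sum, ← mul_sum, hneg]
      ring

/-- Fourier transform of the reciprocal squared distance to `1` on the nontrivial `p`-th roots of
unity. -/
def cosecSqSum (m : ZMod p) : ℂ :=
  ∑ d : ZMod p, stdAddChar (d * m) / ((stdAddChar d - 1) * (stdAddChar (-d) - 1))

lemma cosecSqSum_neg (m : ZMod p) : cosecSqSum (-m) = cosecSqSum m := by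
  rw [cosecSqSum, ← Equiv.sum_comp (Equiv.neg (ZMod p)), cosecSqSum]
  refine sum_congr rfl fun d _ => ?_
  simp [mul_comm]

lemma stdAddChar_mul_stdAddChar_neg (d : ZMod p) : ψ d * ψ (-d) = 1 := by
  rw [← AddChar.map_add_eq_mul, add_neg_cancel, AddChar.map_zero_eq_one]

lemma sum_norm_oddKernel_sq (r : ZMod p) :
    (∑ d, ‖oddKernel r d‖ ^ 2 : ℝ) = 2 * cosecSqSum (0 : ZMod p) + 2 * cosecSqSum (2 * r - 1) := by
  have h (d : ZMod p) : ((‖oddKernel r d‖ ^ 2 : ℝ) : ℂ) =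
      2 * (ψ (d * 0) / ((ψ d - 1) * (ψ (-d) - 1))) +
        (ψ (d * (2 * r - 1)) / ((ψ d - 1) * (ψ (-d) - 1)) +
          ψ (d * -(2 * r - 1)) / ((ψ d - 1) * (ψ (-d) - 1))) := by
    rcases eq_or_ne d 0 with rfl | hd
    · simp [oddKernel]
    have h1 := stdAddChar_sub_one_ne_zero hd
    have h2 := stdAddChar_sub_one_ne_zero (neg_ne_zero.2 hd)
    have hc := stdAddChar_mul_stdAddChar_neg d
    have hr := stdAddChar_mul_stdAddChar_neg (d * r)
    have e1 : ψ (d * (2 * r - 1)) = ψ (d * r) * ψ (d * r) * ψ (-d) := by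
      rw [← AddChar.map_add_eq_mul, ← AddChar.map_add_eq_mul]; ring_nf
    have e2 : ψ (d * -(2 * r - 1)) = ψ (-(d * r)) * ψ (-(d * r)) * ψ d := by
      rw [← AddChar.map_add_eq_mul, ← AddChar.map_add_eq_mul]; ring_nf
    push_cast
    rw [← Complex.mul_conj', oddKernel, map_sub, intervalKernel, intervalKernel, map_div₀, map_div₀,
      map_sub, map_sub, map_one, conj_stdAddChar, conj_stdAddChar, conj_stdAddChar, conj_stdAddChar,
      e1, e2, mul_zero, AddChar.map_zero_eq_one, neg_neg, neg_mul, neg_neg]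
    generalize ψ (d * r) = A at *
    generalize ψ (-(d * r)) = B at *
    generalize ψ d = w at *
    generalize ψ (-d) = v at *
    field_simp
    linear_combination 2 * (w - 1) * (v - 1) * hr - (B ^ 2 * (w - 1) + A ^ 2 * (v - 1)) * hc
  push_cast
  push_cast at h
  rw [sum_congr rfl fun d _ => h d, sum_add_distrib, sum_add_distrib, ← mul_sum]
  change 2 * cosecSqSum 0 + (cosecSqSum (2 * r - 1) + cosecSqSum (-(2 * r - 1))) = _
  rw [cosecSqSum_neg]
  ring

lemma cosecSqSum_second_diff (m : ZMod p) :
    cosecSqSum (m + 1) + cosecSqSum (m - 1) - 2 * cosecSqSum m =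
      1 - if m = 0 then (p : ℂ) else 0 := by
  rw [← sum_stdAddChar_mul, cosecSqSum, cosecSqSum, cosecSqSum, mul_sum, ← sum_add_distrib,
    ← sum_sub_distrib, ← sum_erase_add _ _ (mem_univ (0 : ZMod p)),
    ← sum_erase_add (a := (0 : ZMod p)) univ (fun x => ψ (x * m)) (mem_univ _)]
  simp only [zero_mul, AddChar.map_zero_eq_one, sub_self, div_zero, mul_zero, add_zero]
  rw [← sub_sub, sub_sub_cancel_left, ← sum_neg_distrib]
  refine sum_congr rfl fun d hd => ?_
  have h1 := stdAddChar_sub_one_ne_zero (ne_of_mem_erase hd)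
  have h2 := stdAddChar_sub_one_ne_zero (neg_ne_zero.2 (ne_of_mem_erase hd))
  have hc := stdAddChar_mul_stdAddChar_neg d
  have e1 : ψ (d * (m + 1)) = ψ (d * m) * ψ d := by
    rw [← AddChar.map_add_eq_mul, mul_add, mul_one]
  have e2 : ψ (d * (m - 1)) = ψ (d * m) * ψ (-d) := by
    rw [← AddChar.map_add_eq_mul, mul_sub, mul_one, sub_eq_add_neg]
  rw [e1, e2]
  generalize ψ d = w at *
  generalize ψ (-d) = v at *
  field_simp
  linear_combination ψ (d * m) * hc

lemma cosecSqSum_natCast {m : ℕ} (hm : m ≤ p) :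
    cosecSqSum (m : ZMod p) = cosecSqSum (0 : ZMod p) - m * (p - m) / 2 := by
  induction m using Nat.twoStepInduction with
  | zero => simp
  | one =>
    have h := cosecSqSum_second_diff (0 : ZMod p)
    rw [zero_add, zero_sub, cosecSqSum_neg, if_pos rfl] at h
    push_cast
    linear_combination h / 2
  | more m ih0 ih1 =>
    have h := cosecSqSum_second_diff ((m + 1 : ℕ) : ZMod p)
    have hne : ((m + 1 : ℕ) : ZMod p) ≠ 0 := by
      rw [Ne, ZMod.natCast_eq_zero_iff]
      exact Nat.not_dvd_of_pos_of_lt (Nat.succ_pos m) (by omega)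
    rw [if_neg hne, ih1 (by omega)] at h
    have e1 : ((m + 1 : ℕ) : ZMod p) + 1 = ((m + 2 : ℕ) : ZMod p) := by push_cast; ring
    have e2 : ((m + 1 : ℕ) : ZMod p) - 1 = (m : ZMod p) := by push_cast; ring
    rw [e1, e2, ih0 (by omega)] at h
    push_cast at h ⊢
    linear_combination h

lemma sum_range_mul_sub (x : ℂ) (n : ℕ) :
    ∑ m ∈ range n, (m : ℂ) * (x - m) / 2 = n * (n - 1) * (3 * x - 2 * n + 1) / 12 := by
  induction n with
  | zero => simp
  | succ n ih =>
    rw [sum_range_succ, ih]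
    push_cast
    ring

lemma cosecSqSum_zero : cosecSqSum (0 : ZMod p) = ((p : ℂ) ^ 2 - 1) / 12 := by
  have hp0 : (p : ℂ) ≠ 0 := by exact_mod_cast (Fact.out : p.Prime).ne_zero
  have h1 : ∑ m : ZMod p, cosecSqSum m = 0 := by
    simp_rw [cosecSqSum]
    rw [sum_comm]
    refine sum_eq_zero fun d _ => ?_
    rw [← sum_div]
    simp_rw [mul_comm d, sum_stdAddChar_mul]
    split_ifs with h
    · simp [h]
    · simp
  rw [sum_zmod_eq_sum_range,
    sum_congr rfl fun m hm => cosecSqSum_natCast (p := p) (mem_range.1 hm).le, sum_sub_distrib,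
    sum_range_mul_sub, sum_const, card_range, nsmul_eq_mul] at h1
  apply mul_left_cancel₀ hp0
  linear_combination h1

lemma sum_norm_oddKernel_sq_eq {r : ZMod p} {m : ℕ} (hm : m ≤ p)
    (hr : 2 * r - 1 = m ∨ 2 * r - 1 = -m) :
    ∑ d, ‖oddKernel r d‖ ^ 2 = ((p : ℝ) ^ 2 - 1) / 3 - m * (p - m) := by
  have h := sum_norm_oddKernel_sq r
  have h1 : cosecSqSum (2 * r - 1) = cosecSqSum (m : ZMod p) := by
    rcases hr with hr | hr <;> rw [hr]
    rw [cosecSqSum_neg]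
  rw [h1, cosecSqSum_natCast hm, cosecSqSum_zero] at h
  have h2 : ((∑ d, ‖oddKernel r d‖ ^ 2 : ℝ) : ℂ) = (((p : ℝ) ^ 2 - 1) / 3 - m * (p - m) : ℝ) := by
    rw [h]
    push_cast
    ring
  exact_mod_cast h2

lemma inv_norm_stdAddChar_sub_one_le {d : ℕ} (hd : d ∈ Ico 1 p) :
    ‖ψ d - 1‖⁻¹ ≤ p / 4 * ((d : ℝ)⁻¹ + ((p - d : ℕ) : ℝ)⁻¹) := by
  rw [mem_Ico] at hd
  have hp : (0 : ℝ) < p := by exact_mod_cast (Fact.out : p.Prime).pos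
  have hd0 : (0 : ℝ) < d := by exact_mod_cast hd.1
  have hdp : (d : ℝ) < p := by exact_mod_cast hd.2
  have hn : ‖ψ d - 1‖ = 2 * |Real.sin (Real.pi * d / p)| := by
    have := stdAddChar_coe (N := p) d
    rw [Int.cast_natCast] at this
    rw [this, show 2 * Real.pi * Complex.I * ((d : ℤ) : ℂ) / p =
      Complex.I * ((2 * Real.pi * d / p : ℝ) : ℂ) by push_cast; ring,
      Complex.norm_exp_I_mul_ofReal_sub_one, Real.norm_eq_abs, abs_mul, abs_two]
    congr 3
    ring
  have key {x : ℝ} (hx : 0 < x) (hx2 : x ≤ p / 2) : 2 * x / p ≤ Real.sin (Real.pi * x / p) := by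
    have hpi := Real.pi_pos
    have := Real.mul_le_sin (x := Real.pi * x / p) (by positivity) (by
      rw [div_le_div_iff₀ hp two_pos]; nlinarith)
    refine le_trans (le_of_eq ?_) this
    field_simp
  have hsub : ((p - d : ℕ) : ℝ) = p - d := by rw [Nat.cast_sub hd.2.le]
  rw [hn, hsub]
  have hpd : 0 < (p : ℝ) - d := by linarith
  rcases le_total (d : ℝ) (p / 2) with h | h
  · have h1 := key hd0 h
    have h2 : 0 < 2 * (d : ℝ) / p := by positivity
    rw [abs_of_pos (by linarith)]
    calc (2 * Real.sin (Real.pi * d / p))⁻¹ ≤ (2 * (2 * (d : ℝ) / p))⁻¹ := by gcongr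
      _ = p / 4 * (d : ℝ)⁻¹ := by field_simp; norm_num
      _ ≤ _ := by
        gcongr
        exact le_add_of_nonneg_right (by positivity)
  · have h1 := key hpd (by linarith)
    have h2 : 0 < 2 * ((p : ℝ) - d) / p := by positivity
    rw [show Real.pi * (p - d) / p = Real.pi - Real.pi * d / p by field_simp, Real.sin_pi_sub] at h1
    rw [abs_of_pos (by linarith)]
    calc (2 * Real.sin (Real.pi * d / p))⁻¹ ≤ (2 * (2 * ((p : ℝ) - d) / p))⁻¹ := by gcongr
      _ = p / 4 * ((p : ℝ) - d)⁻¹ := by field_simp; norm_num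
      _ ≤ _ := by
        gcongr
        exact le_add_of_nonneg_left (by positivity)

lemma sum_inv_norm_stdAddChar_sub_one_le :
    ∑ d : ZMod p, ‖ψ d - 1‖⁻¹ ≤ p / 2 * (1 + Real.log p) := by
  have h0 : ∑ d : ZMod p, ‖ψ d - 1‖⁻¹ = ∑ d ∈ Ico 1 p, ‖ψ (d : ZMod p) - 1‖⁻¹ := by
    have := sum_zmod_eq_sum_Ico (p := p) (f := fun d => ((‖ψ d - 1‖⁻¹ : ℝ) : ℂ)) (by simp)
    exact_mod_cast this
  have hpos := (Fact.out : p.Prime).pos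
  have hH : ∑ d ∈ Ico 1 p, (d : ℝ)⁻¹ ≤ 1 + Real.log p := by
    have h := harmonic_le_one_add_log (p - 1)
    rw [harmonic_eq_sum_Icc] at h
    push_cast at h
    have e : Icc 1 (p - 1) = Ico 1 p := by ext; simp; omega
    rw [e] at h
    refine h.trans ?_
    rcases Nat.eq_zero_or_pos (p - 1) with h1 | h1
    · have := (Fact.out : p.Prime).two_le
      omega
    · have : Real.log ((p - 1 : ℕ) : ℝ) ≤ Real.log p :=
        Real.log_le_log (by exact_mod_cast h1) (by exact_mod_cast Nat.sub_le p 1)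
      linarith
  have hR : ∑ d ∈ Ico 1 p, ((p - d : ℕ) : ℝ)⁻¹ = ∑ d ∈ Ico 1 p, (d : ℝ)⁻¹ := by
    have := sum_Ico_reflect (fun d : ℕ => (d : ℝ)⁻¹) 1 (m := p) (n := p) (by omega)
    simpa using this
  rw [h0]
  refine (sum_le_sum fun d hd => inv_norm_stdAddChar_sub_one_le hd).trans ?_
  rw [← mul_sum, sum_add_distrib, hR]
  have hp : (0 : ℝ) < p := by exact_mod_cast hpos
  nlinarith

lemma windowCorr_zero (hp : p ≠ 2) (r : ZMod p) : windowCorr r 0 = p - 1 := by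
  have h := sum_complexQuadraticChar_shift_mul_shift hp r r
  rw [sum_zmod_eq_sum_range, if_pos rfl] at h
  have h2 : ((windowCorr r 0 : ℝ) : ℂ) = ((p - 1 : ℝ) : ℂ) := by
    rw [windowCorr]
    push_cast
    simpa [complexQuadraticChar_apply] using h
  exact_mod_cast h2

lemma abs_sum_windowCorr_sq_sub_le (hp : p ≠ 2) {r : ZMod p} {m : ℕ} (hm : m ≤ p)
    (hr : 2 * r - 1 = m ∨ 2 * r - 1 = -m) :
    |∑ u ∈ Ico 1 p, windowCorr r u ^ 2 - (((p : ℝ) ^ 2 - 1) / 3 - m * (p - m))| ≤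
      2 * p * (1 + Real.log p) ^ 2 + p := by
  have hp0 : (0 : ℝ) < p := by exact_mod_cast (Fact.out : p.Prime).pos
  have hexp : ∑ u ∈ Ico 1 p, windowCorr r u ^ 2 =
      (∑ u ∈ Ico 1 p, centredCorr r u ^ 2) / p ^ 2 - 2 / p * ∑ u ∈ Ico 1 p, centredCorr r u +
        2 / p ^ 2 * ∑ u ∈ Ico 1 p, u * centredCorr r u + ∑ u ∈ Ico 1 p, (1 - (u : ℝ) / p) ^ 2 := by
    rw [sum_div, mul_sum, mul_sum, ← sum_sub_distrib, ← sum_add_distrib, ← sum_add_distrib]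
    refine sum_congr rfl fun u _ => ?_
    rw [centredCorr]
    field_simp
    ring
  have hZ := sum_inv_norm_stdAddChar_sub_one_le (p := p)
  have hZ0 : 0 ≤ ∑ d : ZMod p, ‖ψ d - 1‖⁻¹ := by positivity
  have hE := norm_sum_complexQuadraticChar_mul_oddKernel_le r 0
  have hX := abs_sum_mul_centredCorr_le hp r
  simp only [zero_add] at hE
  rw [hexp, sum_centredCorr hp, sum_centredCorr_sq hp, sum_norm_oddKernel_sq_eq hm hr]
  generalize ∑ d : ZMod p, ‖ψ d - 1‖⁻¹ = Z at *
  generalize ∑ u ∈ Ico 1 p, (u : ℝ) * centredCorr r u = X at *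
  have hE0 : 0 ≤ ‖∑ d, χ d * oddKernel r d‖ := norm_nonneg _
  generalize ‖∑ d, χ d * oddKernel r d‖ = E at *
  have hW : |∑ u ∈ Ico 1 p, (1 - (u : ℝ) / p) ^ 2| ≤ (p : ℝ) := by
    rw [abs_of_nonneg (sum_nonneg fun _ _ => sq_nonneg _)]
    calc _ ≤ ∑ u ∈ Ico 1 p, (1 : ℝ) := by
          refine sum_le_sum fun u hu => ?_
          rw [mem_Ico] at hu
          have h1 : (u : ℝ) / p ≤ 1 := by
            rw [div_le_one hp0]; exact_mod_cast hu.2.le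
          have h2 : 0 ≤ (u : ℝ) / p := by positivity
          nlinarith
      _ ≤ (p : ℝ) := by simp
  generalize ∑ u ∈ Ico 1 p, (1 - (u : ℝ) / p) ^ 2 = W at *
  have hZ2 : Z ^ 2 ≤ p ^ 2 / 4 * (1 + Real.log p) ^ 2 :=
    calc Z ^ 2 ≤ (p / 2 * (1 + Real.log p)) ^ 2 := by gcongr
      _ = _ := by ring
  have hE2 : E ^ 2 / p ≤ p * (1 + Real.log p) ^ 2 := by
    rw [div_le_iff₀ hp0]
    calc E ^ 2 ≤ (2 * Z) ^ 2 := by gcongr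
      _ ≤ _ := by nlinarith
  have hX2 : |2 / p ^ 2 * X| ≤ p * (1 + Real.log p) ^ 2 := by
    rw [abs_mul, abs_of_pos (by positivity)]
    calc 2 / (p : ℝ) ^ 2 * |X| ≤ 2 / p ^ 2 * (2 * p * (p ^ 2 / 4 * (1 + Real.log p) ^ 2)) := by
          gcongr
          exact hX.trans (by gcongr)
      _ = _ := by field_simp; norm_num
  have hE3 : 0 ≤ E ^ 2 / p := by positivity
  have e : (p : ℝ) * (p * ((p ^ 2 - 1) / 3 - m * (p - m)) - E ^ 2) / p ^ 2 - 2 / p * 0 +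
      2 / p ^ 2 * X + W - (((p : ℝ) ^ 2 - 1) / 3 - m * (p - m)) =
      -(E ^ 2 / p) + 2 / p ^ 2 * X + W := by
    field_simp
    ring
  rw [e]
  rw [abs_le] at hX2 hW ⊢
  constructor <;> linarith

lemma seqRotate_ternaryLegendreSeq (s : ℝ) (i : ℤ) :
    seqRotate p s (ternaryLegendreSeq p) i =
      if 0 ≤ i ∧ i < p then
        (quadraticChar (ZMod p) (i + (⌊((p : ℤ) : ℝ) * s⌋ : ℤ)) : ℝ) else 0 := by
  rw [seqRotate]
  split_ifs with h
  · have hp : (0 : ℤ) < p := by exact_mod_cast (Fact.out : p.Prime).pos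
    rw [ternaryLegendreSeq, if_pos ⟨Int.emod_nonneg _ hp.ne', Int.emod_lt_of_pos _ hp⟩,
      ← jacobiSym.legendreSym.to_jacobiSym, legendreSym, ZMod.intCast_mod]
    push_cast
    rfl
  · rfl

lemma seqAutocorr_natCast (s : ℝ) (u : ℕ) :
    seqAutocorr (seqRotate p s (ternaryLegendreSeq p)) u =
      windowCorr ((⌊((p : ℤ) : ℝ) * s⌋ : ℤ) : ZMod p) u := by
  rw [seqAutocorr, finsum_eq_sum_of_support_subset (s := (range (p - u)).map Nat.castEmbedding),
    sum_map, windowCorr]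
  · refine sum_congr rfl fun i hi => ?_
    rw [mem_range] at hi
    rw [seqRotate_ternaryLegendreSeq, seqRotate_ternaryLegendreSeq, Nat.castEmbedding_apply,
      if_pos (by omega), if_pos (by omega)]
    push_cast
    rfl
  · intro i hi
    rw [Function.mem_support, seqRotate_ternaryLegendreSeq, seqRotate_ternaryLegendreSeq] at hi
    have h1 := left_ne_zero_of_mul hi
    have h2 := right_ne_zero_of_mul hi
    simp only [ne_eq, ite_eq_right_iff, not_forall] at h1 h2
    obtain ⟨h1, -⟩ := h1
    obtain ⟨h2, -⟩ := h2
    simp only [coe_map, Set.mem_image, mem_coe, mem_range, Nat.castEmbedding_apply]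
    exact ⟨i.toNat, by omega, by omega⟩

end QuadraticCharacter

lemma seqAutocorr_neg (a : ℤ → ℝ) (u : ℤ) : seqAutocorr a (-u) = seqAutocorr a u := by
  rw [seqAutocorr, ← finsum_comp_equiv (Equiv.addRight u), seqAutocorr]
  refine finsum_congr fun i => ?_
  simp [mul_comm]

lemma finsum_int_of_even {f : ℤ → ℝ} (heven : ∀ u, f (-u) = f u) {n : ℕ} (hn : 0 < n)
    (hf : ∀ u : ℕ, n ≤ u → f u = 0) :
    ∑ᶠ u, f u = f 0 + 2 * ∑ u ∈ Finset.Ico 1 n, f u := by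
  have hdisj : Disjoint ((Finset.range n).image (fun u : ℕ => (u : ℤ)))
      ((Finset.Ico 1 n).image (fun u : ℕ => -(u : ℤ))) := by
    rw [Finset.disjoint_left]
    simp only [Finset.mem_image, Finset.mem_range, Finset.mem_Ico, not_exists, not_and]
    rintro _ ⟨a, ha, rfl⟩ b hb
    omega
  rw [finsum_eq_sum_of_support_subset (s := (Finset.range n).image (fun u : ℕ => (u : ℤ)) ∪
      (Finset.Ico 1 n).image (fun u : ℕ => -(u : ℤ))), Finset.sum_union hdisj,
    Finset.sum_image (by simp), Finset.sum_image (by simp), Finset.range_eq_Ico,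
    Finset.sum_eq_sum_Ico_succ_bot hn]
  · simp only [heven, Nat.cast_zero, zero_add]
    ring
  · intro u hu
    rw [Function.mem_support] at hu
    have hlt : u.natAbs < n := by
      by_contra! h
      refine hu ?_
      have := hf _ h
      rcases Int.natAbs_eq u with h' | h'
      · rwa [h']
      · rwa [h', heven]
    simp only [Finset.coe_union, Finset.coe_image, Set.mem_union, Set.mem_image, Finset.mem_coe,
      Finset.mem_range, Finset.mem_Ico]
    rcases le_or_gt 0 u with h | h
    · exact Or.inl ⟨u.natAbs, hlt, by omega⟩
    · exact Or.inr ⟨u.natAbs, by omega, by omega⟩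

lemma abs_mul_sub_sub_mul_sub_le {x y q : ℝ} (hx0 : 0 ≤ x) (hx : x ≤ q) (hy0 : 0 ≤ y) (hy : y ≤ q)
    (h : |x - y| ≤ 3) : |x * (q - x) - y * (q - y)| ≤ 3 * q := by
  rw [show x * (q - x) - y * (q - y) = (x - y) * (q - x - y) by ring, abs_mul]
  have : |q - x - y| ≤ q := by rw [abs_le]; constructor <;> linarith
  gcongr

/-- The residue of `2⌊ps⌋ - 1` up to sign is represented by some `m ≤ p` which is close to
`2|s|p` up to the reflection `m ↦ p - m`. -/
lemma exists_representative {p : ℕ} (hp : 2 < p) {s : ℝ} (hs1 : -(1 / 2) < s) (hs2 : s ≤ 1 / 2) :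
    ∃ m : ℕ, m ≤ p ∧
      (2 * ((⌊((p : ℤ) : ℝ) * s⌋ : ℤ) : ZMod p) - 1 = m ∨
        2 * ((⌊((p : ℤ) : ℝ) * s⌋ : ℤ) : ZMod p) - 1 = -m) ∧
      |(m : ℝ) * (p - m) - 2 * |s| * p * (p - 2 * |s| * p)| ≤ 3 * p := by
  have hp0 : (2 : ℝ) < p := by exact_mod_cast hp
  have hR1 := Int.floor_le (((p : ℤ) : ℝ) * s)
  have hR2 := Int.lt_floor_add_one (((p : ℤ) : ℝ) * s)
  generalize ⌊((p : ℤ) : ℝ) * s⌋ = R at *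
  rw [Int.cast_natCast] at hR1 hR2
  have hs : |s| ≤ 1 / 2 := abs_le.2 ⟨hs1.le, hs2⟩
  have hy0 : 0 ≤ 2 * |s| * p := by positivity
  have hy : 2 * |s| * p ≤ p := by nlinarith
  have hup : 2 * R ≤ p := by
    have : (2 * R : ℝ) ≤ p := by nlinarith
    exact_mod_cast this
  rcases le_or_gt 1 R with hR | hR
  · obtain ⟨m, hm⟩ := Int.eq_ofNat_of_zero_le (a := 2 * R - 1) (by omega)
    have hmR : (m : ℝ) = 2 * R - 1 := by exact_mod_cast hm.symm
    have hR' : (1 : ℝ) ≤ R := by exact_mod_cast hR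
    have hs0 : 0 ≤ s := by
      by_contra! h
      nlinarith
    rw [abs_of_nonneg hs0] at *
    refine ⟨m, by omega, Or.inl ?_, abs_mul_sub_sub_mul_sub_le (by positivity) ?_ hy0 hy ?_⟩
    · have := congrArg (Int.cast : ℤ → ZMod p) hm
      push_cast at this
      exact this
    · exact_mod_cast (by omega : m ≤ p)
    · rw [hmR, abs_le]
      constructor <;> linarith
  · obtain ⟨k, hk⟩ := Int.eq_ofNat_of_zero_le (a := 1 - 2 * R) (by omega)
    have hkR : (k : ℝ) = 1 - 2 * R := by exact_mod_cast hk.symm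
    have hR' : (R : ℝ) ≤ 0 := by exact_mod_cast (by omega : R ≤ 0)
    have hclose : |(k : ℝ) - 2 * |s| * p| ≤ 3 := by
      rcases le_or_gt 0 s with h | h
      · have hR0 : R = 0 := by
          have h1 : (-1 : ℝ) < R := by nlinarith
          have h2 : -1 < R := by exact_mod_cast h1
          omega
        subst hR0
        rw [abs_of_nonneg h, hkR, abs_le]
        push_cast at *
        constructor <;> nlinarith
      · rw [abs_of_neg h, hkR, abs_le]
        constructor <;> linarith
    have hcast : 2 * (R : ZMod p) - 1 = -k := by
      have := congrArg (Int.cast : ℤ → ZMod p) hk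
      push_cast at this
      linear_combination -this
    rcases le_or_gt k p with hkp | hkp
    · exact ⟨k, hkp, Or.inr hcast, abs_mul_sub_sub_mul_sub_le (by positivity)
        (by exact_mod_cast hkp) hy0 hy hclose⟩
    · obtain ⟨m, rfl⟩ := Nat.exists_eq_add_of_lt hkp
      have hm0 : (0 : ℝ) ≤ m := by positivity
      push_cast at hclose
      rw [abs_le] at hclose
      have hm2 : m + 1 ≤ 3 := by
        have : (m + 1 : ℝ) ≤ 3 := by linarith
        exact_mod_cast this
      refine ⟨m + 1, by omega, Or.inr ?_, ?_⟩
      · rw [hcast]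
        push_cast
        simp
      · have := abs_mul_sub_sub_mul_sub_le (x := ((m + 1 : ℕ) : ℝ)) (y := p - 2 * |s| * p) (q := p)
          (by positivity) (by exact_mod_cast (by omega : m + 1 ≤ p)) (by linarith) (by linarith) (by
            push_cast
            rw [abs_le]
            constructor <;> linarith)
        convert this using 3
        ring

/-- For the rotated ternary Legendre sequence `L_s` of prime length `p > 2`,
`(1/p²) ∑_u C_{L_s}(u)² = 7/6 + 8(|s| - 1/4)² + O(p⁻¹ (log p)²)`. -/
theorem stmt7 (s : ℝ) (hs1 : -(1/2) < s) (hs2 : s ≤ 1/2) :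
    ∃ c : ℝ, 0 < c ∧ ∀ p : ℕ, p.Prime → 2 < p →
      |1 / (p : ℝ) ^ 2 *
          (∑ᶠ u : ℤ, (seqAutocorr (seqRotate p s (ternaryLegendreSeq p)) u) ^ 2)
        - (7/6 + 8 * (|s| - 1/4) ^ 2)|
        ≤ c * (p : ℝ)⁻¹ * (Real.log p) ^ 2 := by
  refine ⟨27, by norm_num, fun p hprime hp2 => ?_⟩
  have : Fact p.Prime := ⟨hprime⟩
  obtain ⟨m, hm, hr, hclose⟩ := exists_representative hp2 hs1 hs2
  have hsum : ∑ᶠ u : ℤ, (seqAutocorr (seqRotate p s (ternaryLegendreSeq p)) u) ^ 2 =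
      (p - 1 : ℝ) ^ 2 +
        2 * ∑ u ∈ Finset.Ico 1 p, windowCorr ((⌊((p : ℤ) : ℝ) * s⌋ : ℤ) : ZMod p) u ^ 2 := by
    rw [finsum_int_of_even (fun u => by rw [seqAutocorr_neg]) hprime.pos fun u hu => by
      rw [seqAutocorr_natCast, windowCorr, Nat.sub_eq_zero_of_le hu]; simp]
    have h0 := seqAutocorr_natCast (p := p) s 0
    rw [Nat.cast_zero, windowCorr_zero hp2.ne'] at h0
    simp_rw [h0, seqAutocorr_natCast]
  have hmain := abs_sum_windowCorr_sq_sub_le hp2.ne' hm hr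
  rw [hsum]
  generalize ∑ u ∈ Finset.Ico 1 p, windowCorr ((⌊((p : ℤ) : ℝ) * s⌋ : ℤ) : ZMod p) u ^ 2 = W at *
  have hp3 : (3 : ℝ) ≤ p := by exact_mod_cast hp2
  have hp0 : (0 : ℝ) < p := by linarith
  have hlog : 1 ≤ Real.log p := by
    rw [Real.le_log_iff_exp_le hp0]
    exact (Real.exp_one_lt_three.le).trans hp3
  generalize |s| = t at *
  have hpl : (p : ℝ) ≤ p * Real.log p ^ 2 := le_mul_of_one_le_right hp0.le (one_le_pow₀ hlog)
  have hpl2 : (p : ℝ) * (1 + Real.log p) ^ 2 ≤ 4 * (p * Real.log p ^ 2) := by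
    calc (p : ℝ) * (1 + Real.log p) ^ 2 ≤ p * (2 * Real.log p) ^ 2 := by gcongr; linarith
      _ = _ := by ring
  have hgoal : |((p - 1 : ℝ) ^ 2 + 2 * W) - p ^ 2 * (7 / 6 + 8 * (t - 1 / 4) ^ 2)| ≤
      27 * (p * Real.log p ^ 2) := by
    rw [show ((p - 1 : ℝ) ^ 2 + 2 * W) - p ^ 2 * (7 / 6 + 8 * (t - 1 / 4) ^ 2) =
      (1 / 3 - 2 * p) + 2 * (W - (((p : ℝ) ^ 2 - 1) / 3 - m * (p - m))) -
        2 * ((m : ℝ) * (p - m) - 2 * t * p * (p - 2 * t * p)) by ring]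
    rw [abs_le] at hmain hclose ⊢
    constructor <;> linarith
  rw [show 1 / (p : ℝ) ^ 2 * ((p - 1 : ℝ) ^ 2 + 2 * W) - (7 / 6 + 8 * (t - 1 / 4) ^ 2) =
    (((p - 1 : ℝ) ^ 2 + 2 * W) - p ^ 2 * (7 / 6 + 8 * (t - 1 / 4) ^ 2)) / p ^ 2 by field_simp,
    abs_div, abs_of_pos (by positivity : (0 : ℝ) < p ^ 2), div_le_iff₀ (by positivity)]
  refine hgoal.trans (le_of_eq ?_)
  field_simp
end
end
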